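/- For all real numbers 0 < p ≤ q ≤ ∞ and every integer m ≥ 0, there exist constants c, C > 0 depending only on p, q, m such that for all integers n, k with 1 ≤ k ≤ n and 2m ≤ k, one has c · (n²/k)^{m + 1/p − 1/q} ≤ M_{q,p}^{(k)}(n, m) ≤ C · (n²/k)^{m + 1/p − 1/q} (with the convention 1/∞ = 0). -/

import Mathlib

open Polynomial MeasureTheory

/-- The `L_q` quasinorm of `f` on `[a,b]` for `0 < q < ∞`. -/
noncomputable def LqNorm (f : ℝ → ℝ) (q a b : ℝ) : ℝ :=
  (∫ x in a..b, |f x| ^ q) ^ (1 / q)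

/-- The sup norm of `f` on `[a,b]`. -/
noncomputable def LinfNorm (f : ℝ → ℝ) (a b : ℝ) : ℝ :=
  sSup ((fun x => |f x|) '' Set.Icc a b)

/-- The `L_q` norm on `[a,b]` for `0 < q ≤ ∞`, `q : ℝ≥0∞`. -/
noncomputable def Lnorm (f : ℝ → ℝ) (q : ENNReal) (a b : ℝ) : ℝ :=
  if q = ⊤ then LinfNorm f a b else LqNorm f q.toReal a b

/-- `P ∈ Δ_n^(k)`: a real polynomial of degree at most `n` all of whose derivatives of
order `0 ≤ m ≤ k` are nonnegative on `[-1,1]`. -/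
def AbsMono (P : Polynomial ℝ) (n k : ℕ) : Prop :=
  P.natDegree ≤ n ∧
    ∀ m ≤ k, ∀ x ∈ Set.Icc (-1 : ℝ) 1, 0 ≤ (derivative^[m] P).eval x

/-- The constrained Markov–Nikolskii constant
`M_{q,p}^{(k)}(n,m) = sup { ‖P^{(m)}‖_q / ‖P‖_p : P ∈ Δ_n^{(k)}, ‖P‖_p > 0 }`. -/
noncomputable def Mconstr (q p : ENNReal) (n k m : ℕ) : ℝ :=
  sSup {r : ℝ | ∃ P : Polynomial ℝ, AbsMono P n k ∧
    0 < Lnorm (fun x => P.eval x) p (-1) 1 ∧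
    r = Lnorm (fun x => (derivative^[m] P).eval x) q (-1) 1 /
          Lnorm (fun x => P.eval x) p (-1) 1}

/-- Integration over `[0,1]` as a linear functional on real polynomials. -/
noncomputable def unitIntegral : ℝ[X] →ₗ[ℝ] ℝ where
  toFun f := ∫ s in (0 : ℝ)..1, f.eval s
  map_add' f g := by
    simp only [eval_add]
    exact intervalIntegral.integral_add (f.continuous.intervalIntegrable _ _)
      (g.continuous.intervalIntegrable _ _)
  map_smul' c f := by simp

theorem unitIntegral_apply (f : ℝ[X]) : unitIntegral f = ∫ s in (0 : ℝ)..1, f.eval s := rfl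

theorem unitIntegral_derivative (f : ℝ[X]) :
    unitIntegral (derivative f) = f.eval 1 - f.eval 0 := by
  rw [unitIntegral_apply]
  exact intervalIntegral.integral_eq_sub_of_hasDerivAt (fun x _ => f.hasDerivAt x)
    ((derivative f).continuous.intervalIntegrable _ _)

theorem unitIntegral_mono {f g : ℝ[X]} (h : ∀ s ∈ Set.Ioo (0 : ℝ) 1, f.eval s ≤ g.eval s) :
    unitIntegral f ≤ unitIntegral g :=
  intervalIntegral.integral_mono_on_of_le_Ioo zero_le_one
    (f.continuous.intervalIntegrable _ _) (g.continuous.intervalIntegrable _ _) h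

theorem unitIntegral_nonneg {f : ℝ[X]} (h : ∀ s ∈ Set.Ioo (0 : ℝ) 1, 0 ≤ f.eval s) :
    0 ≤ unitIntegral f := by
  simpa using unitIntegral_mono (f := 0) (g := f) (by simpa using h)

theorem unitIntegral_pos {f : ℝ[X]} (hf : f ≠ 0) (h : ∀ s ∈ Set.Ioo (0 : ℝ) 1, 0 ≤ f.eval s) :
    0 < unitIntegral f := by
  obtain ⟨x, hx, hfx⟩ : ∃ x ∈ Set.Ioo (0 : ℝ) 1, f.eval x ≠ 0 := by
    by_contra! hall
    exact hf (f.eq_zero_of_infinite_isRoot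
      ((Set.Ioo_infinite (zero_lt_one' ℝ)).mono fun x hx => hall x hx))
  rw [unitIntegral_apply]
  have hx' : 0 < f.eval x := lt_of_le_of_ne (h x hx) (Ne.symm hfx)
  have hcl : ∀ s ∈ Set.Icc (0 : ℝ) 1, 0 ≤ f.eval s := by
    rw [← closure_Ioo (zero_ne_one' ℝ)]
    exact fun s hs => closure_minimal (t := {s | 0 ≤ f.eval s}) h
      (isClosed_le continuous_const f.continuous) hs
  exact intervalIntegral.integral_pos zero_lt_one f.continuous.continuousOn
    (fun s hs => hcl s ⟨hs.1.le, hs.2⟩) ⟨x, ⟨hx.1.le, hx.2.le⟩, hx'⟩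

/-- The Jacobi weight `s ^ a * (1 - s) ^ b`. -/
noncomputable def jacobiWeight (a b : ℕ) : ℝ[X] := X ^ a * (1 - X) ^ b

theorem jacobiWeight_eval_pos (a b : ℕ) {s : ℝ} (hs : s ∈ Set.Ioo (0 : ℝ) 1) :
    0 < (jacobiWeight a b).eval s := by
  have h1 := hs.1
  have h2 : 0 < 1 - s := by linarith [hs.2]
  simp only [jacobiWeight, eval_mul, eval_pow, eval_X, eval_sub, eval_one]
  positivity

/-- The Jacobi differential operator, symmetric for the weight `jacobiWeight a b`. -/
noncomputable def jacobiOp (a b : ℕ) (f : ℝ[X]) : ℝ[X] :=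
  -(X * (1 - X) * derivative (derivative f) +
    (C ((a : ℝ) + 1) - C ((a : ℝ) + b + 2) * X) * derivative f)

theorem jacobiOp_coeff (a b : ℕ) (f : ℝ[X]) (i : ℕ) :
    (jacobiOp a b f).coeff i =
      i * (i + a + b + 1) * f.coeff i - (i + 1) * (i + a + 1) * f.coeff (i + 1) := by
  have : jacobiOp a b f = X ^ 2 * derivative (derivative f) - X * derivative (derivative f)
      - C ((a : ℝ) + 1) * derivative f + C ((a : ℝ) + b + 2) * (X * derivative f) := by
    rw [jacobiOp]; ring
  rw [this]
  simp only [coeff_add, coeff_sub, coeff_C_mul]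
  rcases i with _ | _ | i
  · simp [coeff_derivative]
  · simp [coeff_X_pow_mul', coeff_derivative, coeff_X_mul]; ring
  · simp [coeff_X_pow_mul', coeff_derivative, coeff_X_mul]; ring

theorem unitIntegral_jacobiOp (a b : ℕ) (f g : ℝ[X]) :
    unitIntegral (jacobiWeight a b * jacobiOp a b f * g) =
      unitIntegral (jacobiWeight (a + 1) (b + 1) * derivative f * derivative g) := by
  have h := unitIntegral_derivative (jacobiWeight (a + 1) (b + 1) * derivative f * g)
  have h0 : (jacobiWeight (a + 1) (b + 1) * derivative f * g).eval 1 -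
      (jacobiWeight (a + 1) (b + 1) * derivative f * g).eval 0 = 0 := by
    simp [jacobiWeight]
  rw [h0] at h
  have hd : derivative (jacobiWeight (a + 1) (b + 1) * derivative f * g) =
      jacobiWeight (a + 1) (b + 1) * derivative f * derivative g -
        jacobiWeight a b * jacobiOp a b f * g := by
    simp only [jacobiWeight, jacobiOp, derivative_mul, derivative_pow,
      derivative_sub, derivative_one, derivative_X, Nat.add_sub_cancel, C_add, C_ofNat, C_1,
      Nat.cast_add, Nat.cast_one, map_natCast]
    ring
  rw [hd, map_sub] at h
  linarith

/-- Orthogonal projection onto the polynomials of degree `< d` for a Jacobi weight. -/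
theorem exists_orthogonal_projection (a b d : ℕ) (f : ℝ[X]) :
    ∃ g ∈ degreeLT ℝ d, ∀ u ∈ degreeLT ℝ d,
      unitIntegral (jacobiWeight a b * (f - g) * u) = 0 := by
  let V := degreeLT ℝ d
  let B : ℝ[X] →ₗ[ℝ] ℝ[X] →ₗ[ℝ] ℝ :=
    LinearMap.mk₂ ℝ (fun g u => unitIntegral (jacobiWeight a b * g * u))
      (by intros; rw [← map_add]; congr 1; ring)
      (by intros; rw [← map_smul]; congr 1; simp)
      (by intros; rw [← map_add]; congr 1; ring)
      (by intros; rw [← map_smul]; congr 1; simp)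
  let φ : V →ₗ[ℝ] Module.Dual ℝ V := (B.domRestrict₁₂ V V)
  have : FiniteDimensional ℝ V := (degreeLTEquiv ℝ d).symm.finiteDimensional
  have hinj : Function.Injective φ := by
    rw [injective_iff_map_eq_zero]
    intro g hg
    have h0 : unitIntegral (jacobiWeight a b * (g : ℝ[X]) * g) = 0 :=
      congrArg (fun ψ : Module.Dual ℝ V => ψ g) hg
    by_contra hne
    have hne' : (g : ℝ[X]) ≠ 0 := fun h => hne (Subtype.ext h)
    have hw : jacobiWeight a b ≠ 0 := by
      intro h
      have := jacobiWeight_eval_pos a b (s := 1 / 2) (by norm_num)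
      simp [h] at this
    refine (unitIntegral_pos (mul_ne_zero (mul_ne_zero hw hne') hne') ?_).ne' h0
    intro s hs
    rw [eval_mul, eval_mul, mul_assoc]
    exact mul_nonneg (jacobiWeight_eval_pos a b hs).le (mul_self_nonneg _)
  have hsurj : Function.Surjective φ :=
    (LinearMap.injective_iff_surjective_of_finrank_eq_finrank
      (Subspace.dual_finrank_eq (K := ℝ) (V := V)).symm).1 hinj
  obtain ⟨g, hg⟩ := hsurj ((B f).domRestrict V)
  refine ⟨g, g.2, fun u hu => ?_⟩
  have : unitIntegral (jacobiWeight a b * (g : ℝ[X]) * u) = unitIntegral (jacobiWeight a b * f * u) :=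
    congrArg (fun ψ : Module.Dual ℝ V => ψ ⟨u, hu⟩) hg
  rw [mul_sub, sub_mul, map_sub, this, sub_self]

/-- The weighted `L₂` Bernstein inequality for Jacobi weights. -/
theorem jacobi_bernstein (a b d : ℕ) (f : ℝ[X]) (hf : f.natDegree ≤ d) :
    unitIntegral (jacobiWeight (a + 1) (b + 1) * derivative f * derivative f) ≤
      d * (d + a + b + 1) * unitIntegral (jacobiWeight a b * f * f) := by
  induction d generalizing f with
  | zero =>
    rw [natDegree_eq_zero.1 (Nat.le_zero.1 hf) |>.choose_spec.symm]
    simp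
  | succ d ih =>
    obtain ⟨g, hg, horth⟩ := exists_orthogonal_projection a b (d + 1) f
    obtain ⟨h, rfl⟩ : ∃ h, f = g + h := ⟨f - g, by ring⟩
    rw [add_sub_cancel_left] at horth
    have hgd : g.natDegree ≤ d := by
      rw [mem_degreeLT] at hg
      exact natDegree_le_iff_coeff_eq_zero.2 ((degree_lt_iff_coeff_zero _ _).1 hg)
    have hhd : h.natDegree ≤ d + 1 := by
      have : h = (g + h) - g := by ring
      rw [this]
      exact (natDegree_sub_le _ _).trans (max_le hf (by omega))
    have hlt : ∀ u : ℝ[X], (∀ i, d + 1 ≤ i → u.coeff i = 0) → u ∈ degreeLT ℝ (d + 1) := by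
      intro u hu
      rw [mem_degreeLT]
      exact (degree_lt_iff_coeff_zero _ _).2 hu
    have hgh : unitIntegral (jacobiWeight a b * h * g) = 0 := horth g hg
    have hEgh : unitIntegral (jacobiWeight (a + 1) (b + 1) * derivative g * derivative h) = 0 := by
      rw [← unitIntegral_jacobiOp, mul_right_comm]
      refine horth _ (hlt _ fun i hi => ?_)
      rw [jacobiOp_coeff, coeff_eq_zero_of_natDegree_lt (by omega : g.natDegree < i),
        coeff_eq_zero_of_natDegree_lt (by omega : g.natDegree < i + 1)]
      simp
    have hEhh : unitIntegral (jacobiWeight (a + 1) (b + 1) * derivative h * derivative h) =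
        (d + 1 : ℕ) * ((d + 1 : ℕ) + a + b + 1) * unitIntegral (jacobiWeight a b * h * h) := by
      have h1 := horth (jacobiOp a b h - C (((d + 1 : ℕ) : ℝ) * ((d + 1 : ℕ) + a + b + 1)) * h)
        (hlt _ fun i hi => ?_)
      · rw [← unitIntegral_jacobiOp, ← smul_eq_mul (_ * _ : ℝ), ← map_smul, ← sub_eq_zero, ← map_sub, ← h1]
        congr 1
        rw [smul_eq_C_mul]
        ring
      · rw [coeff_sub, jacobiOp_coeff, coeff_C_mul,
          coeff_eq_zero_of_natDegree_lt (by omega : h.natDegree < i + 1)]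
        rcases hi.eq_or_lt with rfl | hi
        · push_cast; ring
        · rw [coeff_eq_zero_of_natDegree_lt (by omega : h.natDegree < i)]; ring
    have hgg := ih g hgd
    have hgg0 : 0 ≤ unitIntegral (jacobiWeight a b * g * g) := by
      refine unitIntegral_nonneg fun s hs => ?_
      rw [eval_mul, eval_mul, mul_assoc]
      exact mul_nonneg (jacobiWeight_eval_pos a b hs).le (mul_self_nonneg _)
    have e1 : unitIntegral (jacobiWeight a b * (g + h) * (g + h)) =
        unitIntegral (jacobiWeight a b * g * g) + 2 * unitIntegral (jacobiWeight a b * h * g) +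
          unitIntegral (jacobiWeight a b * h * h) := by
      rw [two_mul, ← map_add, ← map_add, ← map_add]; congr 1; ring
    have e2 : unitIntegral (jacobiWeight (a + 1) (b + 1) * derivative (g + h) * derivative (g + h))
        = unitIntegral (jacobiWeight (a + 1) (b + 1) * derivative g * derivative g) +
          2 * unitIntegral (jacobiWeight (a + 1) (b + 1) * derivative g * derivative h) +
          unitIntegral (jacobiWeight (a + 1) (b + 1) * derivative h * derivative h) := by
      rw [two_mul, ← map_add, ← map_add, ← map_add]; congr 1; rw [derivative_add]; ring
    rw [e1, e2, hEgh, hEhh, hgh]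
    have : (d : ℝ) * (d + a + b + 1) ≤ (d + 1 : ℕ) * ((d + 1 : ℕ) + a + b + 1) := by
      push_cast; gcongr <;> linarith
    nlinarith

/-- Polynomials of the form `s ^ i * (1 - s) ^ j * Q ^ 2` of formal degree at most `N`. -/
def weightedSquares (N : ℕ) : Set ℝ[X] :=
  {f | ∃ (i j : ℕ) (Q : ℝ[X]), f = jacobiWeight i j * Q * Q ∧ i + j + 2 * Q.natDegree ≤ N}

open scoped Pointwise in
theorem mul_mem_closure_weightedSquares {M N : ℕ} {f g : ℝ[X]}
    (hf : f ∈ AddSubmonoid.closure (weightedSquares M))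
    (hg : g ∈ AddSubmonoid.closure (weightedSquares N)) :
    f * g ∈ AddSubmonoid.closure (weightedSquares (M + N)) := by
  have hsub : weightedSquares M * weightedSquares N ⊆ weightedSquares (M + N) := by
    rintro _ ⟨_, ⟨i, j, Q, rfl, hQ⟩, _, ⟨i', j', Q', rfl, hQ'⟩, rfl⟩
    refine ⟨i + i', j + j', Q * Q', ?_, ?_⟩
    · simp only [jacobiWeight]; ring
    · have := natDegree_mul_le (p := Q) (q := Q')
      omega
  refine AddSubmonoid.closure_mono hsub ?_
  rw [← AddSubmonoid.closure_mul_closure]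
  exact AddSubmonoid.mul_mem_mul hf hg

theorem C_mem_closure_weightedSquares {c : ℝ} (hc : 0 ≤ c) (N : ℕ) :
    C c ∈ AddSubmonoid.closure (weightedSquares N) :=
  AddSubmonoid.subset_closure ⟨0, 0, C (√c), by
    simp [jacobiWeight, ← C_mul, Real.mul_self_sqrt hc], by simp⟩

theorem eval_nonneg_endpoints {f : ℝ[X]} {u v : ℝ} (huv : u < v)
    (h : ∀ x ∈ Set.Ioo u v, 0 ≤ f.eval x) : 0 ≤ f.eval u ∧ 0 ≤ f.eval v := by
  have hcl : ∀ s ∈ Set.Icc u v, 0 ≤ f.eval s := by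
    rw [← closure_Ioo huv.ne]
    exact fun s hs => closure_minimal (t := {s | 0 ≤ f.eval s}) h
      (isClosed_le continuous_const f.continuous) hs
  exact ⟨hcl u ⟨le_rfl, huv.le⟩, hcl v ⟨huv.le, le_rfl⟩⟩

/-- A polynomial which is nonnegative on `(0,1)` is a sum of weighted squares. -/
theorem mem_closure_weightedSquares (N : ℕ) (R : ℝ[X]) (hN : R.natDegree ≤ N)
    (hR : ∀ s ∈ Set.Ioo (0 : ℝ) 1, 0 ≤ R.eval s) :
    R ∈ AddSubmonoid.closure (weightedSquares N) := by
  induction N using Nat.strong_induction_on generalizing R with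
  | _ N ih =>
  rcases Nat.eq_zero_or_pos R.natDegree with h0 | hpos
  · rw [eq_C_of_natDegree_eq_zero h0]
    refine C_mem_closure_weightedSquares ?_ N
    have := hR (1 / 2) (by norm_num)
    rw [eq_C_of_natDegree_eq_zero h0] at this
    simpa using this
  have hR0 : R ≠ 0 := by rintro rfl; simp at hpos
  obtain ⟨z, hz⟩ := IsAlgClosed.exists_aeval_eq_zero ℂ R
    (by rw [degree_eq_natDegree hR0]; exact_mod_cast hpos.ne')
  by_cases him : z.im = 0
  · have hroot : R.IsRoot z.re := by
      have hzr : z = (algebraMap ℝ ℂ) z.re := Complex.ext rfl (by simpa using him)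
      rw [hzr, aeval_algebraMap_apply] at hz
      simpa using hz
    obtain ⟨R₁, hR₁⟩ := dvd_iff_isRoot.2 hroot
    set r := z.re
    have hev : ∀ s, R.eval s = (s - r) * R₁.eval s := fun s => by rw [hR₁]; simp
    have hR₁0 : R₁ ≠ 0 := by rintro rfl; exact hR0 (by simpa using hR₁)
    have hdeg : R.natDegree = 1 + R₁.natDegree := by
      rw [hR₁, natDegree_mul (X_sub_C_ne_zero r) hR₁0, natDegree_X_sub_C]
    rcases le_or_gt r 0 with hr | hr
    · have h1 : X - C r ∈ AddSubmonoid.closure (weightedSquares 1) := by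
        have : X - C r = X + C (-r) := by rw [C_neg]; ring
        rw [this]
        exact add_mem (AddSubmonoid.subset_closure ⟨1, 0, 1, by simp [jacobiWeight], by simp⟩)
          (C_mem_closure_weightedSquares (by linarith) 1)
      have h2 := ih (N - 1) (by omega) R₁ (by omega) fun s hs => by
        have := hR s hs
        rw [hev] at this
        exact nonneg_of_mul_nonneg_right this (by linarith [hs.1])
      rw [hR₁, show N = 1 + (N - 1) by omega]
      exact mul_mem_closure_weightedSquares h1 h2
    rcases le_or_gt 1 r with hr1 | hr1
    · have h1 : C r - X ∈ AddSubmonoid.closure (weightedSquares 1) := by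
        have : C r - X = (1 - X) + C (r - 1) := by rw [C_sub, C_1]; ring
        rw [this]
        exact add_mem (AddSubmonoid.subset_closure ⟨0, 1, 1, by simp [jacobiWeight], by simp⟩)
          (C_mem_closure_weightedSquares (by linarith) 1)
      have h2 := ih (N - 1) (by omega) (-R₁) (by rw [natDegree_neg]; omega) fun s hs => by
        have := hR s hs
        rw [hev] at this
        rw [eval_neg]
        exact nonneg_of_mul_nonneg_right (a := r - s) (by linarith) (by linarith [hs.2])
      rw [hR₁, show (X - C r) * R₁ = (C r - X) * (-R₁) by ring, show N = 1 + (N - 1) by omega]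
      exact mul_mem_closure_weightedSquares h1 h2
    · have hpos' : ∀ s ∈ Set.Ioo r 1, 0 ≤ R₁.eval s := fun s hs => by
        have := hR s ⟨hr.trans hs.1, hs.2⟩
        rw [hev] at this
        exact nonneg_of_mul_nonneg_right this (by linarith [hs.1])
      have hneg' : ∀ s ∈ Set.Ioo 0 r, 0 ≤ (-R₁).eval s := fun s hs => by
        have := hR s ⟨hs.1, hs.2.trans hr1⟩
        rw [hev] at this
        rw [eval_neg]
        exact nonneg_of_mul_nonneg_right (a := r - s) (by linarith) (by linarith [hs.2])
      have hroot₁ : R₁.IsRoot r := by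
        have e1 := (eval_nonneg_endpoints hr1 hpos').1
        have e2 := (eval_nonneg_endpoints hr hneg').2
        rw [eval_neg] at e2
        exact le_antisymm (by linarith) e1
      obtain ⟨R₂, hR₂⟩ := dvd_iff_isRoot.2 hroot₁
      have hev₁ : ∀ s, R₁.eval s = (s - r) * R₂.eval s := fun s => by rw [hR₂]; simp
      have hR₂0 : R₂ ≠ 0 := by rintro rfl; exact hR₁0 (by simpa using hR₂)
      have hdeg₁ : R₁.natDegree = 1 + R₂.natDegree := by
        rw [hR₂, natDegree_mul (X_sub_C_ne_zero r) hR₂0, natDegree_X_sub_C]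
      have hright : ∀ s ∈ Set.Ioo r 1, 0 ≤ R₂.eval s := fun s hs => by
        have := hpos' s hs
        rw [hev₁] at this
        exact nonneg_of_mul_nonneg_right this (by linarith [hs.1])
      have h1 : (X - C r) * (X - C r) ∈ AddSubmonoid.closure (weightedSquares 2) :=
        AddSubmonoid.subset_closure ⟨0, 0, X - C r, by simp [jacobiWeight], by simp⟩
      have h2 := ih (N - 2) (by omega) R₂ (by omega) fun s hs => by
        rcases lt_trichotomy s r with h | h | h
        · have := hneg' s ⟨hs.1, h⟩
          rw [eval_neg, hev₁] at this
          exact nonneg_of_mul_nonneg_right (a := r - s) (by linarith) (by linarith)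
        · rw [h]; exact (eval_nonneg_endpoints hr1 hright).1
        · exact hright s ⟨h, hs.2⟩
      rw [hR₁, hR₂, ← mul_assoc, show N = 2 + (N - 2) by omega]
      exact mul_mem_closure_weightedSquares h1 h2
  · obtain ⟨R₁, hR₁⟩ := quadratic_dvd_of_aeval_eq_zero_im_ne_zero R hz him
    have hq : X ^ 2 - C (2 * z.re) * X + C (‖z‖ ^ 2) =
        (X - C z.re) * (X - C z.re) + C (z.im * z.im) := by
      rw [Complex.sq_norm, Complex.normSq_apply]
      simp only [C_mul, C_add, C_ofNat]
      ring
    rw [hq] at hR₁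
    have hmem : (X - C z.re) * (X - C z.re) + C (z.im * z.im) ∈
        AddSubmonoid.closure (weightedSquares 2) :=
      add_mem (AddSubmonoid.subset_closure ⟨0, 0, X - C z.re, by simp [jacobiWeight], by simp⟩)
        (C_mem_closure_weightedSquares (mul_self_nonneg _) 2)
    have hqdeg : ((X - C z.re) * (X - C z.re) + C (z.im * z.im)).natDegree = 2 := by
      rw [natDegree_add_C, natDegree_mul (X_sub_C_ne_zero _) (X_sub_C_ne_zero _),
        natDegree_X_sub_C]
    have hR₁0 : R₁ ≠ 0 := by rintro rfl; exact hR0 (by simpa using hR₁)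
    have hdeg : R.natDegree = 2 + R₁.natDegree := by
      rw [hR₁, natDegree_mul (by rintro h; rw [h] at hqdeg; simp at hqdeg) hR₁0, hqdeg]
    have h2 := ih (N - 2) (by omega) R₁ (by omega) fun s hs => by
      have := hR s hs
      rw [hR₁, eval_mul] at this
      refine nonneg_of_mul_nonneg_right this ?_
      have : 0 < z.im * z.im := mul_self_pos.2 him
      simp only [eval_add, eval_mul, eval_sub, eval_X, eval_C]
      nlinarith [mul_self_nonneg (s - z.re)]
    rw [hR₁, show N = 2 + (N - 2) by omega]
    exact mul_mem_closure_weightedSquares hmem h2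

/-- Consecutive moments of a weighted square. -/
theorem moment_le_of_weightedSquare (α n i j : ℕ) (Q : ℝ[X]) (hα : 1 ≤ α)
    (hn : i + j + 2 * Q.natDegree + α + 1 ≤ n) :
    (α : ℝ) ^ 2 * unitIntegral (X ^ (α - 1) * (jacobiWeight i j * Q * Q)) ≤
      7 * (n : ℝ) ^ 2 * unitIntegral (X ^ α * (jacobiWeight i j * Q * Q)) := by
  obtain ⟨β, rfl⟩ : ∃ β, α = β + 1 := ⟨α - 1, by omega⟩
  set d := Q.natDegree
  let a := β + i
  let Y := unitIntegral (jacobiWeight (a + 1) j * Q * Q)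
  let Z := unitIntegral (jacobiWeight a (j + 1) * Q * Q)
  let E := unitIntegral (jacobiWeight (a + 2) (j + 1) * derivative Q * derivative Q)
  have hY0 : 0 ≤ Y := unitIntegral_nonneg fun s hs => by
    rw [eval_mul, eval_mul, mul_assoc]
    exact mul_nonneg (jacobiWeight_eval_pos _ _ hs).le (mul_self_nonneg _)
  have hZ0 : 0 ≤ Z := unitIntegral_nonneg fun s hs => by
    rw [eval_mul, eval_mul, mul_assoc]
    exact mul_nonneg (jacobiWeight_eval_pos _ _ hs).le (mul_self_nonneg _)
  have e1 : unitIntegral (X ^ (β + 1) * (jacobiWeight i j * Q * Q)) = Y := by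
    congr 1; simp only [jacobiWeight, a]; ring
  have e2 : unitIntegral (X ^ (β + 1 - 1) * (jacobiWeight i j * Q * Q)) = Z + Y := by
    simp only [Z, Y]
    rw [← map_add]; congr 1; simp only [jacobiWeight, a, Nat.add_sub_cancel]; ring
  have hE : E ≤ d * (d + (a + 1 : ℕ) + j + 1) * Y := jacobi_bernstein (a + 1) j d Q le_rfl
  have hparts : ((a : ℝ) + 1) * Z =
      (j + 1) * Y - 2 * unitIntegral (jacobiWeight (a + 1) (j + 1) * Q * derivative Q) := by
    have h := unitIntegral_derivative (jacobiWeight (a + 1) (j + 1) * Q * Q)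
    have h0 : (jacobiWeight (a + 1) (j + 1) * Q * Q).eval 1 -
        (jacobiWeight (a + 1) (j + 1) * Q * Q).eval 0 = 0 := by simp [jacobiWeight]
    have hd : derivative (jacobiWeight (a + 1) (j + 1) * Q * Q) =
        ((a : ℝ) + 1) • (jacobiWeight a (j + 1) * Q * Q) -
          ((j : ℝ) + 1) • (jacobiWeight (a + 1) j * Q * Q) +
          (2 : ℝ) • (jacobiWeight (a + 1) (j + 1) * Q * derivative Q) := by
      simp only [jacobiWeight, derivative_mul, derivative_pow,
        derivative_sub, derivative_one, derivative_X, Nat.add_sub_cancel, C_add, C_ofNat, C_1,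
        Nat.cast_add, Nat.cast_one, map_natCast, smul_eq_C_mul]
      ring
    rw [hd, h0, map_add, map_sub, map_smul, map_smul, map_smul] at h
    simp only [smul_eq_mul] at h
    linarith
  have hamgm : -(2 * unitIntegral (jacobiWeight (a + 1) (j + 1) * Q * derivative Q)) ≤
      ((a : ℝ) + 1) / 2 * Z + 2 / ((a : ℝ) + 1) * E := by
    rw [← smul_eq_mul (2 : ℝ), ← smul_eq_mul _ Z, ← smul_eq_mul _ E]
    simp only [Z, E]
    rw [← map_smul, ← map_smul, ← map_smul, ← map_neg, ← map_add]
    refine unitIntegral_mono fun s hs => ?_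
    have hs0 := hs.1
    have hs1 : 0 < 1 - s := by linarith [hs.2]
    have ha : (0 : ℝ) < (a : ℝ) + 1 := by positivity
    simp only [jacobiWeight, eval_neg, eval_smul, eval_add, eval_mul, eval_pow, eval_sub, eval_X,
      eval_one, smul_eq_mul]
    have : ((a : ℝ) + 1) / 2 * (s ^ a * (1 - s) ^ (j + 1) * eval s Q * eval s Q) +
        2 / ((a : ℝ) + 1) * (s ^ (a + 2) * (1 - s) ^ (j + 1) * eval s (derivative Q) *
          eval s (derivative Q)) +
        2 * (s ^ (a + 1) * (1 - s) ^ (j + 1) * eval s Q * eval s (derivative Q)) =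
        s ^ a * (1 - s) ^ (j + 1) / (2 * ((a : ℝ) + 1)) *
          (((a : ℝ) + 1) * eval s Q + 2 * s * eval s (derivative Q)) ^ 2 := by
      field_simp
      ring
    have h2 : 0 ≤ s ^ a * (1 - s) ^ (j + 1) / (2 * ((a : ℝ) + 1)) *
          (((a : ℝ) + 1) * eval s Q + 2 * s * eval s (derivative Q)) ^ 2 := by positivity
    linarith
  rw [e1, e2]
  push_cast at hE ⊢
  have hn' : (i : ℝ) + j + 2 * d + (β + 1) + 1 ≤ n := by exact_mod_cast hn
  have hA : (a : ℝ) = β + i := by simp [a]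
  set A : ℝ := (a : ℝ) + 1 with hAdef
  have hb0 : (0 : ℝ) ≤ β := by positivity
  have hi0 : (0 : ℝ) ≤ i := by positivity
  have hj0 : (0 : ℝ) ≤ j := by positivity
  have hd0 : (0 : ℝ) ≤ d := by positivity
  have hApos : 0 < A := by positivity
  have hβA : (β : ℝ) + 1 ≤ A := by linarith
  have hlam : (d : ℝ) * (d + A + j + 1) ≤ n * n := by gcongr <;> linarith
  have hEn : E ≤ n * n * Y := hE.trans (by gcongr)
  have hj : ((j : ℝ) + 1) * A ≤ n * n := by gcongr <;> linarith
  have hAn : A ^ 2 ≤ n * n := by rw [sq]; gcongr <;> linarith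
  -- clear denominators in the inequality for `Z`
  have hmain : A ^ 2 * Z ≤ 2 * ((j + 1) * A) * Y + 4 * E := by
    have h1 : A * Z ≤ 2 * (j + 1) * Y + 4 / A * E := by
      have : 4 / A * E = 2 * (2 / A * E) := by ring
      linarith
    have h2 := mul_le_mul_of_nonneg_left h1 hApos.le
    have h3 : A * (2 * (j + 1) * Y + 4 / A * E) = 2 * ((j + 1) * A) * Y + 4 * E := by
      field_simp
    rw [h3] at h2
    linarith [h2, sq A, mul_assoc A A Z]
  have hfin : A ^ 2 * (Z + Y) ≤ 7 * (n : ℝ) ^ 2 * Y := by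
    nlinarith [mul_le_mul_of_nonneg_right hj hY0, mul_le_mul_of_nonneg_right hAn hY0]
  refine le_trans ?_ hfin
  gcongr

/-- Consecutive moments of a polynomial which is nonnegative on `(0,1)`. -/
theorem moment_le_of_nonneg (α n : ℕ) (R : ℝ[X]) (hα : 1 ≤ α) (hn : R.natDegree + α + 1 ≤ n)
    (hR : ∀ s ∈ Set.Ioo (0 : ℝ) 1, 0 ≤ R.eval s) :
    (α : ℝ) ^ 2 * unitIntegral (X ^ (α - 1) * R) ≤ 7 * (n : ℝ) ^ 2 * unitIntegral (X ^ α * R) := by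
  have hmem := mem_closure_weightedSquares _ R le_rfl hR
  clear hR
  revert hmem hn
  generalize R.natDegree = N
  intro hn hmem
  induction hmem using AddSubmonoid.closure_induction with
  | mem f hf =>
    obtain ⟨i, j, Q, rfl, hQ⟩ := hf
    exact moment_le_of_weightedSquare α n i j Q hα (by omega)
  | zero => simp
  | add f g _ _ hf hg => simp only [mul_add, map_add]; linarith

theorem unitIntegral_comp_one_sub_X (f : ℝ[X]) : unitIntegral (f.comp (1 - X)) = unitIntegral f := by
  simp only [unitIntegral_apply, eval_comp, eval_sub, eval_one, eval_X]
  rw [intervalIntegral.integral_comp_sub_left (fun s => f.eval s) 1]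
  simp

/-- Consecutive reflected moments of a polynomial which is nonnegative on `(0,1)`. -/
theorem reflected_moment_le_of_nonneg (α n : ℕ) (R : ℝ[X]) (hα : 1 ≤ α)
    (hn : R.natDegree + α + 1 ≤ n) (hR : ∀ s ∈ Set.Ioo (0 : ℝ) 1, 0 ≤ R.eval s) :
    (α : ℝ) ^ 2 * unitIntegral ((1 - X) ^ (α - 1) * R) ≤
      7 * (n : ℝ) ^ 2 * unitIntegral ((1 - X) ^ α * R) := by
  have hdeg : (R.comp (1 - X)).natDegree ≤ R.natDegree := by
    refine natDegree_comp_le.trans ?_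
    have : (1 - X : ℝ[X]).natDegree ≤ 1 := by compute_degree
    nlinarith
  have h := moment_le_of_nonneg α n (R.comp (1 - X)) hα (by omega) fun s hs => by
    simp only [eval_comp, eval_sub, eval_one, eval_X]
    exact hR _ ⟨by linarith [hs.2], by linarith [hs.1]⟩
  have e : ∀ j : ℕ, unitIntegral (X ^ j * R.comp (1 - X)) = unitIntegral ((1 - X) ^ j * R) := by
    intro j
    rw [← unitIntegral_comp_one_sub_X ((1 - X) ^ j * R)]
    simp
  rwa [e, e] at h

theorem reflected_moment_derivative (j : ℕ) (f : ℝ[X]) :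
    unitIntegral ((1 - X) ^ (j + 1) * derivative f) =
      (j + 1) * unitIntegral ((1 - X) ^ j * f) - f.eval 0 := by
  have h := unitIntegral_derivative ((1 - X) ^ (j + 1) * f)
  have hd : derivative ((1 - X) ^ (j + 1) * f) =
      (1 - X) ^ (j + 1) * derivative f - ((j : ℝ) + 1) • ((1 - X) ^ j * f) := by
    simp only [derivative_mul, derivative_pow, derivative_sub, derivative_one, derivative_X,
      Nat.add_sub_cancel, C_add, C_1, Nat.cast_add, Nat.cast_one, map_natCast, smul_eq_C_mul]
    ring
  rw [hd, map_sub, map_smul, smul_eq_mul] at h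
  simp at h
  linarith

/-- The Markov inequality at the endpoint for absolutely monotone polynomials on `[0,1]`. -/
theorem derivative_eval_one_le (T : ℝ[X]) (n k : ℕ) (hk : 2 ≤ k) (hkn : k ≤ n)
    (hdeg : T.natDegree ≤ n)
    (hT : ∀ j ≤ k, ∀ s ∈ Set.Icc (0 : ℝ) 1, 0 ≤ (derivative^[j] T).eval s) :
    (derivative T).eval 1 ≤ 14 * ((n : ℝ) ^ 2 / k) * T.eval 1 := by
  set B : ℝ := 14 * ((n : ℝ) ^ 2 / k) with hB
  have hk0 : (0 : ℝ) < k := by exact_mod_cast (by omega : 0 < k)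
  have hkn' : (k : ℝ) ≤ n := by exact_mod_cast hkn
  have hkB : (k : ℝ) ≤ B := by
    rw [hB, ← mul_div_assoc, le_div_iff₀ hk0]
    nlinarith
  have hchain : ∀ e i : ℕ, i + 2 + e = k →
      ((i : ℝ) + 1) * unitIntegral ((1 - X) ^ i * derivative^[i + 2] T) ≤
        B * unitIntegral ((1 - X) ^ (i + 1) * derivative^[i + 2] T) := by
    intro e
    induction e with
    | zero =>
      intro i hi
      have hi' : (i : ℝ) + 2 = k := by exact_mod_cast hi
      have hnd := natDegree_iterate_derivative T (i + 2)
      have h := reflected_moment_le_of_nonneg (i + 1) n (derivative^[i + 2] T) (by omega) (by omega)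
        fun s hs => hT _ (by omega) s ⟨hs.1.le, hs.2.le⟩
      rw [Nat.add_sub_cancel] at h
      push_cast at h
      have hJ : 0 ≤ unitIntegral ((1 - X) ^ (i + 1) * derivative^[i + 2] T) := by
        refine unitIntegral_nonneg fun s hs => ?_
        rw [eval_mul]
        refine mul_nonneg ?_ (hT _ (by omega) s ⟨hs.1.le, hs.2.le⟩)
        simp only [eval_pow, eval_sub, eval_one, eval_X]
        exact pow_nonneg (by linarith [hs.2]) _
      set J := unitIntegral ((1 - X) ^ (i + 1) * derivative^[i + 2] T)
      have hi1 : (0 : ℝ) < (i : ℝ) + 1 := by positivity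
      have hB' : 7 * (n : ℝ) ^ 2 ≤ ((i : ℝ) + 1) * B := by
        rw [hB, ← mul_div_assoc, ← mul_div_assoc, le_div_iff₀ hk0]
        have : (k : ℝ) ≤ 2 * (i + 1) := by linarith
        nlinarith [sq_nonneg (n : ℝ)]
      refine le_of_mul_le_mul_left ?_ hi1
      calc ((i : ℝ) + 1) * (((i : ℝ) + 1) * unitIntegral ((1 - X) ^ i * derivative^[i + 2] T))
          = ((i : ℝ) + 1) ^ 2 * unitIntegral ((1 - X) ^ i * derivative^[i + 2] T) := by ring
        _ ≤ 7 * (n : ℝ) ^ 2 * J := h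
        _ ≤ ((i : ℝ) + 1) * B * J := by gcongr
        _ = ((i : ℝ) + 1) * (B * J) := by ring
    | succ e ih =>
      intro i hi
      have h := ih (i + 1) (by omega)
      rw [show i + 1 + 2 = i + 2 + 1 by ring, Function.iterate_succ_apply',
        reflected_moment_derivative, reflected_moment_derivative] at h
      push_cast at h
      have hf0 := hT (i + 2) (by omega) 0 (by norm_num)
      have hi' : (i : ℝ) + 2 ≤ k := by exact_mod_cast (by omega : i + 2 ≤ k)
      have hi1 : (0 : ℝ) < (i : ℝ) + 2 := by positivity
      refine le_of_mul_le_mul_left ?_ hi1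
      nlinarith [mul_nonneg (by linarith : 0 ≤ B - (i + 2)) hf0]
  have h := hchain (k - 2) 0 (by omega)
  have e1 := reflected_moment_derivative 0 (derivative T)
  have e2 := unitIntegral_derivative T
  have e3 := unitIntegral_derivative (derivative T)
  have h1 := hT 0 (by omega) 0 (by norm_num)
  have h2 := hT 1 (by omega) 0 (by norm_num)
  have hB2 : 2 ≤ B := by
    have : (2 : ℝ) ≤ k := by exact_mod_cast hk
    linarith
  simp only [Function.iterate_succ, Function.iterate_zero, Function.comp, id, pow_zero, one_mul,
    zero_add, pow_one, Nat.cast_zero] at *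
  rw [e1, e2, e3] at h
  nlinarith

theorem iterate_derivative_comp_linear (T : ℝ[X]) (a b : ℝ) (j : ℕ) :
    derivative^[j] (T.comp (C a * X + C b)) =
      C (a ^ j) * (derivative^[j] T).comp (C a * X + C b) := by
  induction j with
  | zero => simp
  | succ j ih =>
    rw [Function.iterate_succ_apply', ih, Function.iterate_succ_apply', derivative_C_mul,
      derivative_comp]
    simp only [derivative_add, derivative_mul, derivative_C, derivative_X, pow_succ, C_mul]
    ring

theorem AbsMono.iterate_derivative {P : ℝ[X]} {n k : ℕ} (hP : AbsMono P n k) (i : ℕ) (hi : i ≤ k) :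
    AbsMono (derivative^[i] P) n (k - i) := by
  refine ⟨(natDegree_iterate_derivative P i).trans (by have := hP.1; omega), fun m hm x hx => ?_⟩
  rw [← Function.iterate_add_apply]
  exact hP.2 _ (by omega) x hx

theorem AbsMono.derivative_eval_le {P : ℝ[X]} {n k : ℕ} (hP : AbsMono P n k) (hk : 2 ≤ k)
    (hkn : k ≤ n) {x : ℝ} (hx : x ∈ Set.Icc (0 : ℝ) 1) :
    (derivative P).eval x ≤ 14 * ((n : ℝ) ^ 2 / k) * P.eval x := by
  have hx0 := hx.1
  have h := derivative_eval_one_le (P.comp (C (x + 1) * X + C (-1))) n k hk hkn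
    (by
      refine natDegree_comp_le.trans ?_
      have : (C (x + 1) * X + C (-1) : ℝ[X]).natDegree ≤ 1 := by compute_degree
      nlinarith [hP.1])
    (fun j hj s hs => by
      rw [iterate_derivative_comp_linear, eval_mul, eval_C, eval_comp]
      refine mul_nonneg (by positivity) (hP.2 j hj _ ?_)
      simp only [eval_add, eval_mul, eval_C, eval_X]
      constructor <;> nlinarith [hs.1, hs.2, hx.2])
  have hd := iterate_derivative_comp_linear P (x + 1) (-1) 1
  simp only [Function.iterate_one, pow_one] at hd
  rw [hd] at h
  simp only [eval_mul, eval_C, eval_comp, eval_add, eval_X, mul_one, add_neg_cancel_right] at h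
  have h1 := hP.2 1 (by omega) x ⟨by linarith, hx.2⟩
  simp only [Function.iterate_one] at h1
  nlinarith

theorem AbsMono.iterate_derivative_eval_le {P : ℝ[X]} {n k : ℕ} (hP : AbsMono P n k)
    (hk : 1 ≤ k) (hkn : k ≤ n) (m : ℕ) (hm : 2 * m ≤ k) {x : ℝ} (hx : x ∈ Set.Icc (0 : ℝ) 1) :
    (derivative^[m] P).eval x ≤ (28 * ((n : ℝ) ^ 2 / k)) ^ m * P.eval x := by
  induction m with
  | zero => simp
  | succ m ih =>
    have ih := ih (by omega)
    have hQ := hP.iterate_derivative m (by omega)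
    have h := hQ.derivative_eval_le (by omega) (by omega) hx
    have h0 := hQ.2 0 (by omega) x ⟨by linarith [hx.1], hx.2⟩
    simp only [Function.iterate_zero, id] at h0
    rw [Function.iterate_succ_apply']
    have hk0 : (0 : ℝ) < k := by exact_mod_cast hk
    have hle : (k : ℝ) / 2 ≤ (k - m : ℕ) := by
      rw [div_le_iff₀ two_pos]
      exact_mod_cast (by omega : k ≤ (k - m) * 2)
    calc (derivative (derivative^[m] P)).eval x
        ≤ 14 * ((n : ℝ) ^ 2 / (k - m : ℕ)) * (derivative^[m] P).eval x := h
      _ ≤ 14 * ((n : ℝ) ^ 2 / (k / 2)) * (derivative^[m] P).eval x := by gcongr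
      _ = 28 * ((n : ℝ) ^ 2 / k) * (derivative^[m] P).eval x := by field_simp; ring
      _ ≤ 28 * ((n : ℝ) ^ 2 / k) * ((28 * ((n : ℝ) ^ 2 / k)) ^ m * P.eval x) := by gcongr
      _ = _ := by ring

theorem exists_antiderivative (P : ℝ[X]) (a : ℝ) : ∃ S : ℝ[X], derivative S = P ∧ S.eval a = 0 := by
  obtain ⟨S, hS⟩ : ∃ S : ℝ[X], derivative S = P := by
    induction P using Polynomial.induction_on' with
    | add p q hp hq =>
      obtain ⟨S, rfl⟩ := hp
      obtain ⟨S', rfl⟩ := hq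
      exact ⟨S + S', derivative_add⟩
    | monomial i c =>
      refine ⟨monomial (i + 1) (c / (i + 1)), ?_⟩
      rw [derivative_monomial]
      congr 1
      push_cast
      field_simp
  exact ⟨S - C (S.eval a), by simp [hS], by simp⟩

theorem monotoneOn_eval_of_derivative_nonneg {S : ℝ[X]} {a b : ℝ}
    (h : ∀ x ∈ Set.Icc a b, 0 ≤ (derivative S).eval x) :
    MonotoneOn (fun x => S.eval x) (Set.Icc a b) :=
  monotoneOn_of_deriv_nonneg (convex_Icc a b) S.continuous.continuousOn
    S.differentiable.differentiableOn fun x hx => by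
      rw [Polynomial.deriv]; exact h x (interior_subset hx)

theorem AbsMono.monotoneOn {P : ℝ[X]} {n k : ℕ} (hP : AbsMono P n k) (hk : 1 ≤ k) :
    MonotoneOn (fun x => P.eval x) (Set.Icc (-1) 1) :=
  monotoneOn_eval_of_derivative_nonneg (hP.2 1 hk)

theorem AbsMono.nonneg {P : ℝ[X]} {n k : ℕ} (hP : AbsMono P n k) {x : ℝ}
    (hx : x ∈ Set.Icc (-1 : ℝ) 1) : 0 ≤ P.eval x :=
  hP.2 0 (Nat.zero_le k) x hx

theorem AbsMono.eval_le_eval_one {P : ℝ[X]} {n k : ℕ} (hP : AbsMono P n k) (hk : 1 ≤ k) {x : ℝ}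
    (hx : x ∈ Set.Icc (-1 : ℝ) 1) : P.eval x ≤ P.eval 1 :=
  hP.monotoneOn hk hx (by norm_num) hx.2

theorem AbsMono.of_derivative {S : ℝ[X]} {n k : ℕ} (hP : AbsMono (derivative S) n k)
    (h0 : 0 ≤ S.eval (-1)) : AbsMono S (n + 1) (k + 1) := by
  refine ⟨?_, fun m hm x hx => ?_⟩
  · have := hP.1
    rw [natDegree_derivative] at this
    omega
  · rcases m with _ | m
    · exact h0.trans (monotoneOn_eval_of_derivative_nonneg (fun x hx => hP.nonneg hx)
        (by norm_num) hx hx.1)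
    · rw [Function.iterate_succ_apply]
      exact hP.2 m (by omega) x hx

theorem AbsMono.mul {P Q : ℝ[X]} {n n' k : ℕ} (hP : AbsMono P n k) (hQ : AbsMono Q n' k) :
    AbsMono (P * Q) (n + n') k := by
  refine ⟨natDegree_mul_le.trans (add_le_add hP.1 hQ.1), fun m hm x hx => ?_⟩
  rw [iterate_derivative_mul, eval_finsetSum]
  refine Finset.sum_nonneg fun i hi => ?_
  rw [nsmul_eq_mul, eval_mul, eval_natCast, eval_mul]
  exact mul_nonneg (Nat.cast_nonneg _)
    (mul_nonneg (hP.2 _ (by omega) x hx) (hQ.2 _ (by have := Finset.mem_range.1 hi; omega) x hx))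

theorem AbsMono.one (k : ℕ) : AbsMono 1 0 k := by
  refine ⟨by simp, fun m _ x _ => ?_⟩
  rcases m with _ | m
  · simp
  · simp [Function.iterate_succ_apply]

theorem AbsMono.pow {P : ℝ[X]} {n k : ℕ} (hP : AbsMono P n k) (r : ℕ) :
    AbsMono (P ^ r) (r * n) k := by
  induction r with
  | zero => simpa using AbsMono.one k
  | succ r ih => rw [pow_succ, add_mul, one_mul]; exact ih.mul hP

theorem AbsMono.eval_one_le_integral {P : ℝ[X]} {n k : ℕ} (hP : AbsMono P n k) (hk : 1 ≤ k)
    (hkn : k ≤ n) : P.eval 1 ≤ 56 * ((n : ℝ) ^ 2 / k) * ∫ x in (-1 : ℝ)..1, P.eval x := by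
  obtain ⟨S, rfl, h0⟩ := exists_antiderivative P (-1)
  have hS := hP.of_derivative h0.ge
  have h := hS.derivative_eval_le (by omega) (by omega) (x := 1) (by norm_num)
  have hint : ∫ x in (-1 : ℝ)..1, (derivative S).eval x = S.eval 1 := by
    rw [intervalIntegral.integral_eq_sub_of_hasDerivAt (fun x _ => S.hasDerivAt x)
      ((derivative S).continuous.intervalIntegrable _ _), h0, sub_zero]
  rw [hint]
  refine h.trans ?_
  have hS1 : 0 ≤ S.eval 1 := hS.nonneg (by norm_num)
  refine mul_le_mul_of_nonneg_right ?_ hS1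
  have hk0 : (0 : ℝ) < k := by exact_mod_cast hk
  have hn1 : (1 : ℝ) ≤ n := by exact_mod_cast hk.trans hkn
  push_cast
  calc 14 * (((n : ℝ) + 1) ^ 2 / (k + 1)) ≤ 14 * ((n + n) ^ 2 / k) := by gcongr; linarith
    _ = _ := by ring

theorem continuous_abs_eval_rpow (P : ℝ[X]) {p : ℝ} (hp : 0 < p) :
    Continuous fun x => |P.eval x| ^ p :=
  P.continuous.abs.rpow_const fun _ => Or.inr hp.le

theorem integral_abs_eval_rpow_nonneg (P : ℝ[X]) (p : ℝ) :
    0 ≤ ∫ x in (-1 : ℝ)..1, |P.eval x| ^ p :=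
  intervalIntegral.integral_nonneg (by norm_num) fun _ _ => by positivity

theorem AbsMono.integral_rpow_le {P : ℝ[X]} {n k : ℕ} (hP : AbsMono P n k) (hk : 1 ≤ k)
    {p q : ℝ} (hp : 0 < p) (hpq : p ≤ q) :
    ∫ x in (-1 : ℝ)..1, |P.eval x| ^ q ≤
      P.eval 1 ^ (q - p) * ∫ x in (-1 : ℝ)..1, |P.eval x| ^ p := by
  rw [← intervalIntegral.integral_const_mul]
  refine intervalIntegral.integral_mono_on (by norm_num)
    ((continuous_abs_eval_rpow P (hp.trans_le hpq)).intervalIntegrable _ _)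
    (((continuous_abs_eval_rpow P hp).const_mul _).intervalIntegrable _ _) fun x hx => ?_
  have h0 := hP.nonneg hx
  rw [abs_of_nonneg h0]
  calc P.eval x ^ q = P.eval x ^ (q - p) * P.eval x ^ p := by
        rw [← Real.rpow_add_of_nonneg h0 (by linarith) hp.le, sub_add_cancel]
    _ ≤ _ := by
        gcongr
        exact hP.eval_le_eval_one hk hx

theorem AbsMono.eval_one_rpow_le {P : ℝ[X]} {n k : ℕ} (hP : AbsMono P n k) (hk : 1 ≤ k)
    (hkn : k ≤ n) {p : ℝ} (hp : 0 < p) :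
    P.eval 1 ^ p ≤
      56 * (⌈p⌉₊ : ℝ) ^ 2 * ((n : ℝ) ^ 2 / k) * ∫ x in (-1 : ℝ)..1, |P.eval x| ^ p := by
  have hI := integral_abs_eval_rpow_nonneg P p
  set I := ∫ x in (-1 : ℝ)..1, |P.eval x| ^ p
  rcases (hP.nonneg (x := 1) (by norm_num)).eq_or_lt with h1 | h1
  · rw [← h1, Real.zero_rpow hp.ne']
    positivity
  have hr : 1 ≤ ⌈p⌉₊ := Nat.one_le_ceil_iff.2 hp
  have hpr : p ≤ (⌈p⌉₊ : ℝ) := Nat.le_ceil p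
  set r := ⌈p⌉₊
  have h := (hP.pow r).eval_one_le_integral hk (by nlinarith)
  have hint : ∫ x in (-1 : ℝ)..1, (P ^ r).eval x = ∫ x in (-1 : ℝ)..1, |P.eval x| ^ (r : ℝ) := by
    refine intervalIntegral.integral_congr fun x hx => ?_
    rw [Set.uIcc_of_le (by norm_num)] at hx
    simp only [eval_pow, Real.rpow_natCast, abs_of_nonneg (hP.nonneg hx)]
  rw [hint, eval_pow, ← Real.rpow_natCast] at h
  have h2 := h.trans (mul_le_mul_of_nonneg_left (hP.integral_rpow_le hk hp hpr) (by positivity))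
  have hsplit : P.eval 1 ^ (r : ℝ) = P.eval 1 ^ ((r : ℝ) - p) * P.eval 1 ^ p := by
    rw [← Real.rpow_add h1, sub_add_cancel]
  rw [hsplit] at h2
  refine le_of_mul_le_mul_left (h2.trans_eq ?_) (Real.rpow_pos_of_pos h1 ((r : ℝ) - p))
  push_cast
  ring

theorem AbsMono.Lnorm_top {P : ℝ[X]} {n k : ℕ} (hP : AbsMono P n k) (hk : 1 ≤ k) :
    Lnorm (fun x => P.eval x) ⊤ (-1) 1 = P.eval 1 := by
  rw [Lnorm, if_pos rfl, LinfNorm]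
  refine IsGreatest.csSup_eq ⟨⟨1, by norm_num, abs_of_nonneg (hP.nonneg (by norm_num))⟩, ?_⟩
  rintro _ ⟨x, hx, rfl⟩
  simp only [abs_of_nonneg (hP.nonneg hx)]
  exact hP.eval_le_eval_one hk hx

theorem Lnorm_of_ne_top (f : ℝ → ℝ) {q : ENNReal} (hq : q ≠ ⊤) (a b : ℝ) :
    Lnorm f q a b = (∫ x in a..b, |f x| ^ q.toReal) ^ (1 / q.toReal) := by
  rw [Lnorm, if_neg hq, LqNorm]

theorem AbsMono.Lnorm_nonneg {P : ℝ[X]} {n k : ℕ} (hP : AbsMono P n k) (hk : 1 ≤ k)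
    (q : ENNReal) : 0 ≤ Lnorm (fun x => P.eval x) q (-1) 1 := by
  by_cases hq : q = ⊤
  · rw [hq, hP.Lnorm_top hk]; exact hP.nonneg (by norm_num)
  · rw [Lnorm_of_ne_top _ hq]
    exact Real.rpow_nonneg (integral_abs_eval_rpow_nonneg P _) _

/-- The Nikolskii inequality between `L_∞` and `L_p`. -/
theorem exists_eval_one_le_Lnorm {p : ENNReal} (hp : 0 < p) :
    ∃ C : ℝ, 0 < C ∧ ∀ (n k : ℕ) (P : ℝ[X]), 1 ≤ k → k ≤ n → AbsMono P n k →
      P.eval 1 ≤ C * ((n : ℝ) ^ 2 / k) ^ (1 / p.toReal) * Lnorm (fun x => P.eval x) p (-1) 1 := by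
  by_cases hpt : p = ⊤
  · refine ⟨1, one_pos, fun n k P hk hkn hP => ?_⟩
    rw [hpt, hP.Lnorm_top hk]
    simp
  have hp0 : 0 < p.toReal := ENNReal.toReal_pos hp.ne' hpt
  have hr : 1 ≤ ⌈p.toReal⌉₊ := Nat.one_le_ceil_iff.2 hp0
  have hr0 : (0 : ℝ) < ⌈p.toReal⌉₊ := by exact_mod_cast hr
  refine ⟨(56 * (⌈p.toReal⌉₊ : ℝ) ^ 2) ^ (1 / p.toReal), by positivity, fun n k P hk hkn hP => ?_⟩
  have h := hP.eval_one_rpow_le hk hkn hp0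
  have hI := integral_abs_eval_rpow_nonneg P p.toReal
  have h1 : 0 ≤ P.eval 1 := hP.nonneg (by norm_num)
  have h2 := Real.rpow_le_rpow (by positivity) h (by positivity : 0 ≤ 1 / p.toReal)
  rw [← Real.rpow_mul h1, mul_one_div_cancel hp0.ne', Real.rpow_one,
    Real.mul_rpow (by positivity) hI, Real.mul_rpow (by positivity) (by positivity)] at h2
  rwa [Lnorm_of_ne_top _ hpt]

/-- The Nikolskii inequality between `L_q` and `L_p`. -/
theorem exists_Lnorm_le_Lnorm {p q : ENNReal} (hp : 0 < p) (hpq : p ≤ q) :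
    ∃ C : ℝ, 0 < C ∧ ∀ (n k : ℕ) (P : ℝ[X]), 1 ≤ k → k ≤ n → AbsMono P n k →
      Lnorm (fun x => P.eval x) q (-1) 1 ≤
        C * ((n : ℝ) ^ 2 / k) ^ (1 / p.toReal - 1 / q.toReal) *
          Lnorm (fun x => P.eval x) p (-1) 1 := by
  obtain ⟨C, hC, h⟩ := exists_eval_one_le_Lnorm hp
  by_cases hqt : q = ⊤
  · refine ⟨C, hC, fun n k P hk hkn hP => ?_⟩
    rw [hqt, hP.Lnorm_top hk]
    simpa using h n k P hk hkn hP
  have hpt : p ≠ ⊤ := fun hpt => hqt (top_le_iff.1 (hpt ▸ hpq))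
  have hp0 : 0 < p.toReal := ENNReal.toReal_pos hp.ne' hpt
  have hpq' : p.toReal ≤ q.toReal := ENNReal.toReal_mono hqt hpq
  have hq0 : 0 < q.toReal := hp0.trans_le hpq'
  refine ⟨C ^ ((q.toReal - p.toReal) * (1 / q.toReal)), by positivity,
    fun n k P hk hkn hP => ?_⟩
  have hI := integral_abs_eval_rpow_nonneg P p.toReal
  have hle := hP.integral_rpow_le hk hp0 hpq'
  have hN := hP.Lnorm_nonneg hk p
  have hNp : ∫ x in (-1 : ℝ)..1, |P.eval x| ^ p.toReal =
      Lnorm (fun x => P.eval x) p (-1) 1 ^ p.toReal := by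
    rw [Lnorm_of_ne_top _ hpt, ← Real.rpow_mul hI, one_div_mul_cancel hp0.ne', Real.rpow_one]
  rw [hNp] at hle
  have h1 := h n k P hk hkn hP
  have h0 : 0 ≤ P.eval 1 := hP.nonneg (by norm_num)
  set N := Lnorm (fun x => P.eval x) p (-1) 1
  rw [Lnorm_of_ne_top _ hqt]
  have hν : (0 : ℝ) ≤ (n : ℝ) ^ 2 / k := by positivity
  set ν : ℝ := (n : ℝ) ^ 2 / k
  set P' := p.toReal
  set Q := q.toReal
  calc (∫ x in (-1 : ℝ)..1, |P.eval x| ^ Q) ^ (1 / Q)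
      ≤ (((C * ν ^ (1 / P')) * N) ^ (Q - P') * N ^ P') ^ (1 / Q) := by
        refine Real.rpow_le_rpow (integral_abs_eval_rpow_nonneg P _) (hle.trans ?_) (by positivity)
        gcongr
    _ = ((C * ν ^ (1 / P')) ^ (Q - P') * N ^ Q) ^ (1 / Q) := by
        rw [Real.mul_rpow (by positivity) hN, mul_assoc,
          ← Real.rpow_add_of_nonneg hN (by linarith) hp0.le, sub_add_cancel]
    _ = (C * ν ^ (1 / P')) ^ ((Q - P') * (1 / Q)) * N := by
        rw [Real.mul_rpow (by positivity) (by positivity), ← Real.rpow_mul (by positivity),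
          ← Real.rpow_mul hN, mul_one_div_cancel hq0.ne', Real.rpow_one]
    _ = C ^ ((Q - P') * (1 / Q)) * ν ^ (1 / P' - 1 / Q) * N := by
        rw [Real.mul_rpow hC.le (by positivity), ← Real.rpow_mul hν]
        congr 3
        field_simp

/-- The Markov inequality in `L_q`. -/
theorem exists_Lnorm_iterate_derivative_le {q : ENNReal} (hq : 0 < q) (m : ℕ) :
    ∃ C : ℝ, 0 < C ∧ ∀ (n k : ℕ) (P : ℝ[X]), 1 ≤ k → k ≤ n → 2 * m ≤ k → AbsMono P n k →
      Lnorm (fun x => (derivative^[m] P).eval x) q (-1) 1 ≤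
        C * ((n : ℝ) ^ 2 / k) ^ m * Lnorm (fun x => P.eval x) q (-1) 1 := by
  by_cases hqt : q = ⊤
  · refine ⟨28 ^ m, by positivity, fun n k P hk hkn hm hP => ?_⟩
    rw [hqt, hP.Lnorm_top hk, (hP.iterate_derivative m (by omega)).Lnorm_top (by omega), ← mul_pow]
    exact hP.iterate_derivative_eval_le hk hkn m hm (by norm_num)
  have hq0 : 0 < q.toReal := ENNReal.toReal_pos hq.ne' hqt
  refine ⟨2 ^ (1 / q.toReal) * 28 ^ m, by positivity, fun n k P hk hkn hm hP => ?_⟩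
  have hD := hP.iterate_derivative m (by omega)
  have hmono := hD.monotoneOn (by omega)
  rw [Lnorm_of_ne_top _ hqt, Lnorm_of_ne_top _ hqt]
  have hpt := fun x (hx : x ∈ Set.Icc (0 : ℝ) 1) => hP.iterate_derivative_eval_le hk hkn m hm hx
  set D := derivative^[m] P
  set Q := q.toReal
  set K : ℝ := (28 * ((n : ℝ) ^ 2 / k)) ^ m with hK
  have hK0 : 0 ≤ K := by positivity
  have hcD := continuous_abs_eval_rpow D hq0
  have hcP := continuous_abs_eval_rpow P hq0
  have hleft : ∫ x in (-1 : ℝ)..0, |D.eval x| ^ Q ≤ |D.eval 0| ^ Q := by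
    calc ∫ x in (-1 : ℝ)..0, |D.eval x| ^ Q ≤ ∫ _ in (-1 : ℝ)..0, |D.eval 0| ^ Q := by
          refine intervalIntegral.integral_mono_on (by norm_num) (hcD.intervalIntegrable _ _)
            (continuous_const.intervalIntegrable _ _) fun x hx => ?_
          have hx' : x ∈ Set.Icc (-1 : ℝ) 1 := ⟨hx.1, by linarith [hx.2]⟩
          rw [abs_of_nonneg (hD.nonneg hx'), abs_of_nonneg (hD.nonneg (by norm_num))]
          exact Real.rpow_le_rpow (hD.nonneg hx') (hmono hx' (by norm_num) hx.2) hq0.le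
      _ = |D.eval 0| ^ Q := by simp
  have hright : |D.eval 0| ^ Q ≤ ∫ x in (0 : ℝ)..1, |D.eval x| ^ Q := by
    calc |D.eval 0| ^ Q = ∫ _ in (0 : ℝ)..1, |D.eval 0| ^ Q := by simp
      _ ≤ _ := by
          refine intervalIntegral.integral_mono_on (by norm_num)
            (continuous_const.intervalIntegrable _ _) (hcD.intervalIntegrable _ _) fun x hx => ?_
          have hx' : x ∈ Set.Icc (-1 : ℝ) 1 := ⟨by linarith [hx.1], hx.2⟩
          rw [abs_of_nonneg (hD.nonneg hx'), abs_of_nonneg (hD.nonneg (by norm_num))]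
          exact Real.rpow_le_rpow (hD.nonneg (by norm_num)) (hmono (by norm_num) hx' hx.1) hq0.le
  have hcmp : ∫ x in (0 : ℝ)..1, |D.eval x| ^ Q ≤ K ^ Q * ∫ x in (0 : ℝ)..1, |P.eval x| ^ Q := by
    rw [← intervalIntegral.integral_const_mul]
    refine intervalIntegral.integral_mono_on (by norm_num) (hcD.intervalIntegrable _ _)
      ((hcP.const_mul _).intervalIntegrable _ _) fun x hx => ?_
    have hx' : x ∈ Set.Icc (-1 : ℝ) 1 := ⟨by linarith [hx.1], hx.2⟩
    rw [abs_of_nonneg (hD.nonneg hx'), abs_of_nonneg (hP.nonneg hx'),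
      ← Real.mul_rpow hK0 (hP.nonneg hx')]
    exact Real.rpow_le_rpow (hD.nonneg hx') (hpt x hx) hq0.le
  have hPsplit := intervalIntegral.integral_add_adjacent_intervals
    (hcP.intervalIntegrable (μ := volume) (-1) 0) (hcP.intervalIntegrable 0 1)
  have hDsplit := intervalIntegral.integral_add_adjacent_intervals
    (hcD.intervalIntegrable (μ := volume) (-1) 0) (hcD.intervalIntegrable 0 1)
  have hP0 : 0 ≤ ∫ x in (-1 : ℝ)..0, |P.eval x| ^ Q :=
    intervalIntegral.integral_nonneg (by norm_num) fun _ _ => by positivity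
  have hPI := integral_abs_eval_rpow_nonneg P Q
  have htot : ∫ x in (-1 : ℝ)..1, |D.eval x| ^ Q ≤
      2 * K ^ Q * ∫ x in (-1 : ℝ)..1, |P.eval x| ^ Q := by
    have hKQ : 0 ≤ K ^ Q := by positivity
    nlinarith [mul_nonneg hKQ hP0]
  refine (Real.rpow_le_rpow (integral_abs_eval_rpow_nonneg D Q) htot
    (by positivity : 0 ≤ 1 / Q)).trans_eq ?_
  rw [Real.mul_rpow (by positivity) hPI, Real.mul_rpow (by positivity) (by positivity),
    ← Real.rpow_mul hK0, mul_one_div_cancel hq0.ne', Real.rpow_one, hK, mul_pow]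
  ring

/-- A Fejér-type kernel on `[0,1]` concentrated at `0` on the scale `1 / M ^ 2`. -/
theorem exists_fejer_kernel (M : ℕ) (hM : 1 ≤ M) :
    ∃ G : ℝ[X], G.natDegree ≤ M - 1 ∧
      (∀ s ∈ Set.Ioc (0 : ℝ) 1, 0 ≤ G.eval s ∧ s * G.eval s ≤ 2) ∧
      ∀ s ∈ Set.Ioc (0 : ℝ) 1, (M : ℝ) ^ 2 * s ≤ 1 → (M : ℝ) ^ 2 / 2 ≤ G.eval s := by
  have hM1 : (1 : ℝ) ≤ M := by exact_mod_cast hM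
  obtain ⟨G, hG⟩ : X ∣ 1 - (Chebyshev.T ℝ M).comp (1 - C 2 * X) := by
    rw [X_dvd_iff, coeff_zero_eq_eval_zero]
    simp [eval_comp]
  have key : ∀ s ∈ Set.Ioc (0 : ℝ) 1, ∃ φ, 0 < φ ∧ φ ≤ Real.pi / 2 ∧ s = Real.sin φ ^ 2 ∧
      s * G.eval s = 2 * Real.sin (M * φ) ^ 2 := by
    intro s hs
    have hsq0 : 0 < √s := Real.sqrt_pos.2 hs.1
    have hsin : Real.sin (Real.arcsin (√s)) = √s :=
      Real.sin_arcsin (by linarith) (Real.sqrt_le_one.2 hs.2)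
    have hsφ : s = Real.sin (Real.arcsin (√s)) ^ 2 := by rw [hsin, Real.sq_sqrt hs.1.le]
    refine ⟨Real.arcsin (√s), Real.arcsin_pos.2 hsq0, Real.arcsin_le_pi_div_two _, hsφ, ?_⟩
    generalize Real.arcsin (√s) = φ at hsφ
    have h := congrArg (fun f : ℝ[X] => f.eval s) hG
    simp only [eval_sub, eval_one, eval_comp, eval_mul, eval_C, eval_X] at h
    have hcos : 1 - 2 * s = Real.cos (2 * φ) := by
      rw [Real.cos_two_mul, Real.cos_sq', hsφ]; ring
    rw [hcos, Chebyshev.T_real_cos] at h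
    rw [← h, show ((M : ℤ) : ℝ) * (2 * φ) = 2 * (M * φ) by push_cast; ring, Real.cos_two_mul,
      Real.cos_sq']
    ring
  refine ⟨G, ?_, fun s hs => ?_, fun s hs hMs => ?_⟩
  · by_cases hG0 : G = 0
    · simp [hG0]
    have h1 : (X * G).natDegree = G.natDegree + 1 := natDegree_X_mul hG0
    rw [← hG] at h1
    have h2 : (1 - (Chebyshev.T ℝ M).comp (1 - C 2 * X)).natDegree ≤ M := by
      refine (natDegree_sub_le _ _).trans (max_le (by simp) (natDegree_comp_le.trans ?_))
      have : (1 - C 2 * X : ℝ[X]).natDegree ≤ 1 := by compute_degree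
      rw [Chebyshev.natDegree_T]
      simp only [Int.natAbs_natCast]
      nlinarith
    omega
  · obtain ⟨φ, -, -, -, hφ⟩ := key s hs
    refine ⟨?_, ?_⟩
    · refine nonneg_of_mul_nonneg_right (a := s) ?_ hs.1
      rw [hφ]; positivity
    · rw [hφ]
      nlinarith [Real.sin_sq_le_one (M * φ)]
  · obtain ⟨φ, h0, h1, h2, hφ⟩ := key s hs
    have hpi := Real.pi_pos
    have hsin0 : 0 ≤ Real.sin φ := Real.sin_nonneg_of_nonneg_of_le_pi h0.le (by linarith)
    have hMsin : M * Real.sin φ ≤ 1 := by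
      rw [h2, ← mul_pow] at hMs
      exact (sq_le_one_iff₀ (by positivity)).1 hMs
    have hjordan := Real.mul_le_sin h0.le h1
    have hMφ : M * φ ≤ Real.pi / 2 := by
      have h3 : M * (2 / Real.pi * φ) ≤ 1 := (by gcongr : _ ≤ M * Real.sin φ).trans hMsin
      have h4 : M * φ = Real.pi / 2 * (M * (2 / Real.pi * φ)) := by field_simp
      rw [h4]
      nlinarith
    have hjordan' := Real.mul_le_sin (by positivity : 0 ≤ M * φ) hMφ
    have hlow : M * Real.sin φ / 2 ≤ Real.sin (M * φ) := by
      have h5 : Real.sin φ ≤ φ := Real.sin_le h0.le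
      have h6 : 1 / 2 ≤ 2 / Real.pi := by
        rw [div_le_div_iff₀ two_pos hpi]; linarith [Real.pi_le_four]
      calc M * Real.sin φ / 2 = 1 / 2 * (M * Real.sin φ) := by ring
        _ ≤ 2 / Real.pi * (M * φ) := by gcongr
        _ ≤ _ := hjordan'
    have hsq : (M * Real.sin φ / 2) ^ 2 ≤ Real.sin (M * φ) ^ 2 := by gcongr
    refine le_of_mul_le_mul_left ?_ hs.1
    rw [hφ]
    have : (M * Real.sin φ / 2) ^ 2 = (M : ℝ) ^ 2 * s / 4 := by rw [h2]; ring
    linarith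

theorem integral_inv_sq_add_le {c : ℝ} (hc : 0 < c) :
    ∫ s in (0 : ℝ)..1, ((s + c) ^ 2)⁻¹ ≤ 1 / c := by
  have h : ∫ s in (0 : ℝ)..1, ((s + c) ^ 2)⁻¹ = -(1 + c)⁻¹ - -(0 + c)⁻¹ := by
    have hne : ∀ s ∈ Set.uIcc (0 : ℝ) 1, s + c ≠ 0 := fun s hs => by
      rw [Set.uIcc_of_le zero_le_one] at hs
      linarith [hs.1]
    refine intervalIntegral.integral_eq_sub_of_hasDerivAt (f := fun s => -(s + c)⁻¹)
      (fun s hs => ?_) (ContinuousOn.intervalIntegrable ?_)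
    · have := (((hasDerivAt_id s).add_const c).inv (hne s hs)).neg
      refine this.congr_deriv ?_
      simp [neg_div]
    · exact ContinuousOn.inv₀ (by fun_prop) fun s hs => pow_ne_zero 2 (hne s hs)
  rw [h, zero_add, one_div]
  have : 0 < (1 + c)⁻¹ := by positivity
  linarith

/-- Consecutive moments of a high power of a Fejér-type kernel. -/
theorem fejer_moment_le {G : ℝ[X]} {M : ℕ} (hM : 1 ≤ M)
    (hG : ∀ s ∈ Set.Ioc (0 : ℝ) 1, 0 ≤ G.eval s ∧ s * G.eval s ≤ 2)
    (hG' : ∀ s ∈ Set.Ioc (0 : ℝ) 1, (M : ℝ) ^ 2 * s ≤ 1 → (M : ℝ) ^ 2 / 2 ≤ G.eval s)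
    (j e : ℕ) (hje : j + 1 ≤ e) :
    unitIntegral (X ^ (j + 1) * G ^ (j + 3 + e)) ≤
      128 / (M : ℝ) ^ 2 * unitIntegral (X ^ j * G ^ (j + 3 + e)) := by
  have hM1 : (1 : ℝ) ≤ M := by exact_mod_cast hM
  set L : ℝ := (M : ℝ) ^ 2 with hL
  have hL1 : 1 ≤ L := one_le_pow₀ hM1
  have hL0 : 0 < L := by linarith
  set c : ℝ := 64 / L with hc
  have hc0 : 0 < c := by positivity
  set μ := unitIntegral (X ^ j * G ^ (j + 3 + e)) with hμ
  set A : ℝ := 4 * 2 ^ (j + 3) * (2 / c) ^ e with hA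
  -- pointwise splitting at the scale `c`
  have hupper : unitIntegral (X ^ (j + 1) * G ^ (j + 3 + e)) ≤ c * μ + A * (1 / c) := by
    have hcont : ContinuousOn (fun s : ℝ => ((s + c) ^ 2)⁻¹) (Set.uIcc 0 1) := by
      refine ContinuousOn.inv₀ (by fun_prop) fun s hs => ?_
      rw [Set.uIcc_of_le zero_le_one] at hs
      have := hs.1
      positivity
    calc unitIntegral (X ^ (j + 1) * G ^ (j + 3 + e))
        ≤ ∫ s in (0 : ℝ)..1, (c * (X ^ j * G ^ (j + 3 + e)).eval s + A * ((s + c) ^ 2)⁻¹) := by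
          refine intervalIntegral.integral_mono_on_of_le_Ioo zero_le_one
            (Polynomial.continuous _ |>.intervalIntegrable _ _)
            (((Polynomial.continuous _ |>.intervalIntegrable _ _).const_mul _).add
              (hcont.intervalIntegrable.const_mul _)) fun s hs => ?_
          have hs0 := hs.1
          obtain ⟨h0, h2⟩ := hG s ⟨hs.1, hs.2.le⟩
          simp only [eval_mul, eval_pow, eval_X]
          set g := G.eval s
          rcases le_total s c with h | h
          · have h3 : s ^ (j + 1) * g ^ (j + 3 + e) ≤ c * (s ^ j * g ^ (j + 3 + e)) := by
              rw [pow_succ', mul_assoc]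
              gcongr
            have : 0 ≤ A * ((s + c) ^ 2)⁻¹ := by positivity
            linarith
          · have hg : g ≤ 2 / c := by
              rw [le_div_iff₀ hc0]
              nlinarith
            have h3 : s ^ (j + 1) * g ^ (j + 3 + e) ≤ A * ((s + c) ^ 2)⁻¹ := by
              rw [← div_eq_mul_inv, le_div_iff₀ (by positivity)]
              calc s ^ (j + 1) * g ^ (j + 3 + e) * (s + c) ^ 2
                  ≤ s ^ (j + 1) * g ^ (j + 3 + e) * (s + s) ^ 2 := by gcongr
                _ = 4 * (s * g) ^ (j + 3) * g ^ e := by ring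
                _ ≤ 4 * 2 ^ (j + 3) * (2 / c) ^ e := by gcongr
            have : 0 ≤ c * (s ^ j * g ^ (j + 3 + e)) := by positivity
            linarith
      _ = c * μ + A * ∫ s in (0 : ℝ)..1, ((s + c) ^ 2)⁻¹ := by
          rw [intervalIntegral.integral_add
            ((Polynomial.continuous _ |>.intervalIntegrable _ _).const_mul _)
            (hcont.intervalIntegrable.const_mul _), intervalIntegral.integral_const_mul,
            intervalIntegral.integral_const_mul, hμ, unitIntegral_apply]
      _ ≤ c * μ + A * (1 / c) := by
          gcongr
          exact integral_inv_sq_add_le hc0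
  have hlower : (L / 2) ^ (j + 3 + e) * ((1 / L) ^ (j + 1) / (j + 1)) ≤ μ := by
    have hδ : 1 / L ≤ 1 := by rw [div_le_one hL0]; exact hL1
    calc (L / 2) ^ (j + 3 + e) * ((1 / L) ^ (j + 1) / (j + 1))
        = ∫ s in (0 : ℝ)..(1 / L), (L / 2) ^ (j + 3 + e) * s ^ j := by
          rw [intervalIntegral.integral_const_mul, integral_pow]
          simp
      _ ≤ ∫ s in (0 : ℝ)..(1 / L), (X ^ j * G ^ (j + 3 + e)).eval s := by
          refine intervalIntegral.integral_mono_on_of_le_Ioo (by positivity)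
            ((by fun_prop : Continuous fun s : ℝ =>
              (L / 2) ^ (j + 3 + e) * s ^ j).intervalIntegrable _ _)
            (Polynomial.continuous _ |>.intervalIntegrable _ _) fun s hs => ?_
          have hs0 := hs.1
          have h := hG' s ⟨hs.1, hs.2.le.trans hδ⟩ (by
            have := hs.2.le
            rw [le_div_iff₀ hL0] at this
            linarith)
          simp only [eval_mul, eval_pow, eval_X]
          rw [mul_comm]
          gcongr
      _ ≤ μ := by
          rw [hμ, unitIntegral_apply]
          refine intervalIntegral.integral_mono_interval le_rfl (by positivity) hδ ?_
            (Polynomial.continuous _ |>.intervalIntegrable _ _)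
          refine (ae_restrict_iff' measurableSet_Ioc).2 (Filter.Eventually.of_forall fun s hs => ?_)
          have := (hG s hs).1
          have := hs.1
          simp only [eval_mul, eval_pow, eval_X, Pi.zero_apply]
          positivity
  have hnum : A * (1 / c) ≤ c * ((L / 2) ^ (j + 3 + e) * ((1 / L) ^ (j + 1) / (j + 1))) := by
    have e1 : A * (1 / c) = 4 * 2 ^ (j + 3) * L ^ (e + 1) * 2 ^ e / 64 ^ (e + 1) := by
      have h2c : 2 / c = 2 * L / 64 := by rw [hc]; field_simp
      rw [hA, h2c, hc, div_pow, mul_pow, pow_succ L, pow_succ (64 : ℝ)]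
      field_simp
    have e2 : c * ((L / 2) ^ (j + 3 + e) * ((1 / L) ^ (j + 1) / (j + 1))) =
        64 * L ^ (e + 1) / (2 ^ (j + 3) * 2 ^ e * (j + 1)) := by
      rw [hc]
      simp only [div_pow, one_pow, pow_add]
      field_simp
    rw [e1, e2, div_le_div_iff₀ (by positivity) (by positivity)]
    have hj1 : ((j : ℝ) + 1) ≤ 4 ^ e := by
      have : j + 1 ≤ 4 ^ e := hje.trans (Nat.lt_pow_self (by norm_num)).le
      exact_mod_cast this
    have hj3 : (4 : ℝ) ^ (j + 3) ≤ 4 ^ (e + 2) := pow_le_pow_right₀ (by norm_num) (by omega)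
    have e64 : (64 : ℝ) ^ (e + 1) = 64 * (4 ^ e * 4 ^ e * 4 ^ e) := by
      rw [← mul_pow, ← mul_pow, pow_succ']; norm_num
    calc 4 * 2 ^ (j + 3) * L ^ (e + 1) * 2 ^ e * (2 ^ (j + 3) * 2 ^ e * ((j : ℝ) + 1))
        = 4 * ((2 * 2) ^ (j + 3) * (2 * 2) ^ e * ((j : ℝ) + 1)) * L ^ (e + 1) := by
          rw [mul_pow, mul_pow]; ring
      _ = 4 * (4 ^ (j + 3) * 4 ^ e * ((j : ℝ) + 1)) * L ^ (e + 1) := by norm_num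
      _ ≤ 4 * (4 ^ (e + 2) * 4 ^ e * 4 ^ e) * L ^ (e + 1) := by gcongr
      _ ≤ 64 * L ^ (e + 1) * 64 ^ (e + 1) := by
          rw [e64, pow_add (4 : ℝ) e 2]
          have : (0 : ℝ) ≤ 4 ^ e * 4 ^ e * 4 ^ e * L ^ (e + 1) := by positivity
          nlinarith
  have hfin : 128 / L * μ = c * μ + c * μ := by rw [hc]; ring
  rw [hfin]
  have := mul_le_mul_of_nonneg_left hlower hc0.le
  linarith

theorem exists_iterated_antiderivative (N : ℕ) (R : ℝ[X]) :
    ∃ Z : ℝ[X], derivative^[N] Z = R ∧ Z.natDegree ≤ R.natDegree + N ∧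
      ∀ i < N, (derivative^[i] Z).eval 0 = 0 := by
  induction N with
  | zero => exact ⟨R, rfl, le_rfl, by simp⟩
  | succ N ih =>
    obtain ⟨Y, hY, hYdeg, hY0⟩ := ih
    obtain ⟨Z, rfl, hZ0⟩ := exists_antiderivative Y 0
    refine ⟨Z, by rw [Function.iterate_succ_apply, hY], ?_, fun i hi => ?_⟩
    · rw [natDegree_derivative] at hYdeg
      omega
    · rcases i with _ | i
      · exact hZ0
      · rw [Function.iterate_succ_apply]
        exact hY0 i (by omega)

theorem factorial_mul_eval_one (N : ℕ) (f : ℝ[X])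
    (hf : ∀ i < N + 1, (derivative^[i] f).eval 0 = 0) :
    (N.factorial : ℝ) * f.eval 1 = unitIntegral ((1 - X) ^ N * derivative^[N + 1] f) := by
  induction N with
  | zero =>
    have := unitIntegral_derivative f
    have h0 := hf 0 (by omega)
    simp only [Function.iterate_zero, id] at h0
    simp [this, h0]
  | succ N ih =>
    rw [Function.iterate_succ_apply', reflected_moment_derivative, hf (N + 1) (by omega),
      ← ih fun i hi => hf i (by omega), Nat.factorial_succ]
    push_cast
    ring

/-- A polynomial on `[0,1]` with nonnegative derivatives whose lower derivatives grow at the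
maximal rate at `1`. -/
theorem exists_fast_growing_unit (k M : ℕ) (hk : 1 ≤ k) (hM : 1 ≤ M) :
    ∃ Z : ℝ[X], Z.natDegree ≤ 2 * (k + 2) * M ∧
      (∀ i ≤ k + 1, ∀ x ∈ Set.Icc (0 : ℝ) 1, 0 ≤ (derivative^[i] Z).eval x) ∧
      Z.eval 0 = 0 ∧ 0 < (derivative Z).eval 1 ∧
      ∀ i, 2 * i ≤ k →
        (k : ℝ) * M ^ 2 / 256 * (derivative^[i] Z).eval 1 ≤ (derivative^[i + 1] Z).eval 1 := by
  obtain ⟨G, hGdeg, hG, hG'⟩ := exists_fejer_kernel M hM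
  have hM0 : (0 : ℝ) < M := by exact_mod_cast hM
  have hk0 : (0 : ℝ) < k := by exact_mod_cast hk
  have hG0 : G ≠ 0 := by
    rintro rfl
    have hM1 : (1 : ℝ) ≤ M ^ 2 := one_le_pow₀ (by exact_mod_cast hM)
    have := hG' (1 / (M : ℝ) ^ 2) ⟨by positivity, (div_le_one (by positivity)).2 hM1⟩
      (by rw [mul_one_div_cancel (by positivity)])
    rw [eval_zero] at this
    linarith
  set r := 2 * (k + 2) with hr
  set R : ℝ[X] := (G ^ r).comp (1 - X) with hR
  have hmoment : ∀ l, unitIntegral ((1 - X) ^ l * R) = unitIntegral (X ^ l * G ^ r) := fun l => by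
    rw [← unitIntegral_comp_one_sub_X (X ^ l * G ^ r), mul_comp, hR]
    simp
  have hpos : ∀ l, 0 < unitIntegral ((1 - X) ^ l * R) := fun l => by
    rw [hmoment]
    refine unitIntegral_pos (mul_ne_zero (pow_ne_zero _ X_ne_zero) (pow_ne_zero _ hG0))
      fun s hs => ?_
    have h1 := (hG s ⟨hs.1, hs.2.le⟩).1
    have h2 := hs.1
    simp only [eval_mul, eval_pow, eval_X]
    positivity
  have hstep : ∀ j ≤ k, unitIntegral ((1 - X) ^ (j + 1) * R) ≤
      128 / (M : ℝ) ^ 2 * unitIntegral ((1 - X) ^ j * R) := fun j hj => by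
    rw [hmoment, hmoment, show r = j + 3 + (2 * k + 1 - j) by omega]
    exact fejer_moment_le hM hG hG' j _ (by omega)
  obtain ⟨Z, hZ, hZdeg, hZ0⟩ := exists_iterated_antiderivative (k + 1) R
  have hend : ∀ j i, i + j = k →
      (j.factorial : ℝ) * (derivative^[i] Z).eval 1 = unitIntegral ((1 - X) ^ j * R) := by
    intro j i hij
    rw [factorial_mul_eval_one j (derivative^[i] Z), ← Function.iterate_add_apply,
      show j + 1 + i = k + 1 by omega, hZ]
    intro l hl
    rw [← Function.iterate_add_apply]
    exact hZ0 _ (by omega)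
  refine ⟨Z, ?_, ?_, hZ0 0 (by omega), ?_, ?_⟩
  · have h1 : R.natDegree ≤ r * (M - 1) := by
      refine natDegree_comp_le.trans ?_
      have : (1 - X : ℝ[X]).natDegree ≤ 1 := by compute_degree
      calc (G ^ r).natDegree * (1 - X : ℝ[X]).natDegree ≤ (r * (M - 1)) * 1 :=
            Nat.mul_le_mul (natDegree_pow_le_of_le r hGdeg) this
        _ = r * (M - 1) := mul_one _
    obtain ⟨M, rfl⟩ : ∃ M', M = M' + 1 := ⟨M - 1, by omega⟩
    rw [Nat.add_sub_cancel] at h1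
    rw [mul_add]
    omega
  · have hdown : ∀ j ≤ k + 1, ∀ x ∈ Set.Icc (0 : ℝ) 1,
        0 ≤ (derivative^[k + 1 - j] Z).eval x := by
      intro j
      induction j with
      | zero =>
        intro _ x _
        rw [Nat.sub_zero, hZ, hR, eval_comp, eval_pow, hr]
        exact (even_two_mul _).pow_nonneg _
      | succ j ih =>
        intro hj x hx
        have ih := ih (by omega)
        rw [show k + 1 - j = (k + 1 - (j + 1)) + 1 by omega, Function.iterate_succ_apply'] at ih
        have h := monotoneOn_eval_of_derivative_nonneg ih (by norm_num) hx hx.1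
        simp only [hZ0 _ (by omega : k + 1 - (j + 1) < k + 1)] at h
        exact h
    intro i hi x hx
    have := hdown (k + 1 - i) (by omega) x hx
    rwa [show k + 1 - (k + 1 - i) = i by omega] at this
  · have h := hend (k - 1) 1 (by omega)
    have h' := hpos (k - 1)
    rw [← h] at h'
    exact pos_of_mul_pos_right h' (by positivity)
  · intro i hi
    obtain ⟨j, hj⟩ : ∃ j, k = i + 1 + j := ⟨k - (i + 1), by omega⟩
    have h1 := hend (j + 1) i (by omega)
    have h2 := hend j (i + 1) (by omega)
    have h3 := hstep j (by omega)
    rw [← h1, ← h2, Nat.factorial_succ] at h3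
    push_cast at h3
    have hf : (0 : ℝ) < j.factorial := by exact_mod_cast j.factorial_pos
    have h4 : ((j : ℝ) + 1) * (derivative^[i] Z).eval 1 ≤
        128 / (M : ℝ) ^ 2 * (derivative^[i + 1] Z).eval 1 := by
      refine le_of_mul_le_mul_left ?_ hf
      linarith
    have h5 : 0 ≤ (derivative^[i] Z).eval 1 := by
      have := hpos (j + 1)
      rw [← h1] at this
      exact (pos_of_mul_pos_right this (by positivity)).le
    have h6 : (k : ℝ) / 2 ≤ j + 1 := by
      have : (k : ℝ) ≤ 2 * (j + 1) := by exact_mod_cast (by omega : k ≤ 2 * (j + 1))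
      linarith
    have h7 := (mul_le_mul_of_nonneg_right h6 h5).trans h4
    calc (k : ℝ) * M ^ 2 / 256 * (derivative^[i] Z).eval 1
        = (M : ℝ) ^ 2 / 128 * (k / 2 * (derivative^[i] Z).eval 1) := by ring
      _ ≤ (M : ℝ) ^ 2 / 128 * (128 / (M : ℝ) ^ 2 * (derivative^[i + 1] Z).eval 1) := by gcongr
      _ = (derivative^[i + 1] Z).eval 1 := by field_simp

/-- An absolutely monotone polynomial concentrated at `1` on the scale `1 / (k * M ^ 2)`. -/
theorem exists_concentrated (k M m : ℕ) (hk : 1 ≤ k) (hM : 1 ≤ M) (hm : 2 * m ≤ k) :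
    ∃ P : ℝ[X], AbsMono P (2 * (k + 2) * M) k ∧ 0 < P.eval 1 ∧
      ((k : ℝ) * M ^ 2 / 512) ^ m * P.eval 1 ≤ (derivative^[m] P).eval 1 ∧
      ∫ x in (-1 : ℝ)..1, P.eval x ≤ 512 / ((k : ℝ) * M ^ 2) * P.eval 1 := by
  obtain ⟨Z, hdeg, hnn, h0, h1, hgrow⟩ := exists_fast_growing_unit k M hk hM
  have hM0 : (0 : ℝ) < M := by exact_mod_cast hM
  have hk0 : (0 : ℝ) < k := by exact_mod_cast hk
  set W : ℝ[X] := Z.comp (C (1 / 2) * X + C (1 / 2)) with hW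
  have hWeval : ∀ i x, (derivative^[i] W).eval x =
      (1 / 2) ^ i * (derivative^[i] Z).eval (1 / 2 * x + 1 / 2) := fun i x => by
    rw [hW, iterate_derivative_comp_linear]
    simp [eval_comp]
  have hWone : ∀ i, (derivative^[i] W).eval 1 = (1 / 2) ^ i * (derivative^[i] Z).eval 1 :=
    fun i => by rw [hWeval]; norm_num
  have hWgrow : ∀ i, 2 * i ≤ k →
      (k : ℝ) * M ^ 2 / 512 * (derivative^[i] W).eval 1 ≤ (derivative^[i + 1] W).eval 1 := by
    intro i hi
    rw [hWone, hWone, pow_succ (1 / 2 : ℝ)]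
    have := mul_le_mul_of_nonneg_left (hgrow i hi) (by positivity : (0 : ℝ) ≤ (1 / 2) ^ i * (1 / 2))
    linarith
  have hWdeg : W.natDegree ≤ 2 * (k + 2) * M := by
    refine natDegree_comp_le.trans ?_
    have : (C (1 / 2) * X + C (1 / 2) : ℝ[X]).natDegree ≤ 1 := natDegree_linear_le
    nlinarith
  have hpos : 0 < (derivative W).eval 1 := by
    have := hWone 1
    simp only [Function.iterate_one] at this
    rw [this]
    positivity
  refine ⟨derivative W, ⟨?_, fun i hi x hx => ?_⟩, hpos, ?_, ?_⟩
  · rw [natDegree_derivative]; omega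
  · rw [← Function.iterate_succ_apply, hWeval]
    exact mul_nonneg (by positivity)
      (hnn _ (by omega) _ ⟨by linarith [hx.1], by linarith [hx.2]⟩)
  · rw [← Function.iterate_succ_apply]
    clear hpos
    induction m with
    | zero => simp
    | succ m ih =>
      refine le_trans ?_ (hWgrow (m + 1) hm)
      rw [pow_succ', mul_assoc]
      gcongr
      exact ih (by omega)
  · rw [intervalIntegral.integral_eq_sub_of_hasDerivAt (fun x _ => W.hasDerivAt x)
      ((derivative W).continuous.intervalIntegrable _ _)]
    have e0 : W.eval (-1) = 0 := by
      have := hWeval 0 (-1)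
      norm_num at this
      rw [this, h0]
    have := hWgrow 0 (by omega)
    simp only [Function.iterate_zero, id, zero_add, Function.iterate_one] at this
    rw [e0, sub_zero, div_mul_eq_mul_div, le_div_iff₀ (by positivity)]
    linarith

theorem AbsMono.mono_degree {P : ℝ[X]} {n n' k : ℕ} (hP : AbsMono P n k) (h : n ≤ n') :
    AbsMono P n' k :=
  ⟨hP.1.trans h, hP.2⟩

theorem AbsMono.iterate_derivative_mul_eval_le {P Q : ℝ[X]} {n n' k : ℕ} (hP : AbsMono P n k)
    (hQ : AbsMono Q n' k) {m : ℕ} (hm : m ≤ k) {x : ℝ} (hx : x ∈ Set.Icc (-1 : ℝ) 1) :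
    (derivative^[m] P).eval x * Q.eval x ≤ (derivative^[m] (P * Q)).eval x := by
  rw [iterate_derivative_mul, eval_finsetSum]
  refine le_trans (le_of_eq ?_) (Finset.single_le_sum (fun i hi => ?_)
    (Finset.mem_range.2 m.succ_pos : 0 ∈ Finset.range m.succ))
  · simp
  · rw [nsmul_eq_mul, eval_mul, eval_natCast, eval_mul]
    have := Finset.mem_range.1 hi
    exact mul_nonneg (Nat.cast_nonneg _)
      (mul_nonneg (hP.2 _ (by omega) x hx) (hQ.2 _ (by omega) x hx))

theorem AbsMono.X_add_one (k : ℕ) : AbsMono (X + C 1) 1 k := by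
  refine ⟨(natDegree_X_add_C 1).le, fun m _ x hx => ?_⟩
  rcases m with _ | _ | m
  · simp only [Function.iterate_zero, id, eval_add, eval_X, eval_C]
    linarith [hx.1]
  · simp
  · simp [Function.iterate_succ_apply]

theorem exists_extremal_of_degree_large {p : ℝ} {ρ : ℕ} (hρ : 1 ≤ ρ) (hρp : 1 ≤ ρ * p)
    {n k m : ℕ} (hk : 1 ≤ k) (hm : 2 * m ≤ k) (hn : ρ * (2 * (k + 2)) ≤ n) :
    ∃ P : ℝ[X], AbsMono P n k ∧ 0 < P.eval 1 ∧
      ((n : ℝ) ^ 2 / k / (73728 * ρ ^ 2)) ^ m * P.eval 1 ≤ (derivative^[m] P).eval 1 ∧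
      ∫ x in (-1 : ℝ)..1, |P.eval x| ^ p ≤
        73728 * ρ ^ 2 / ((n : ℝ) ^ 2 / k) * P.eval 1 ^ p := by
  have hden : 0 < ρ * (2 * (k + 2)) := by positivity
  obtain ⟨M, hMdef⟩ : ∃ M, M = n / (ρ * (2 * (k + 2))) := ⟨_, rfl⟩
  have hM : 1 ≤ M := hMdef ▸ (Nat.one_le_div_iff hden).2 hn
  have hMn : ρ * (2 * (k + 2)) * M ≤ n := hMdef ▸ Nat.mul_div_le n _
  have hnM : n < ρ * (2 * (k + 2)) * (M + 1) := hMdef ▸ Nat.lt_mul_div_succ n hden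
  have hnle : n ≤ 12 * ρ * k * M := by
    calc n ≤ ρ * (2 * (k + 2)) * (M + 1) := hnM.le
      _ ≤ ρ * (2 * (3 * k)) * (2 * M) := by gcongr <;> omega
      _ = 12 * ρ * k * M := by ring
  obtain ⟨P, hP, hP1, hPm, hPint⟩ := exists_concentrated k M m hk hM hm
  obtain ⟨s, rfl⟩ : ∃ s, ρ = s + 1 := ⟨ρ - 1, by omega⟩
  have hM0 : (0 : ℝ) < M := by exact_mod_cast hM
  have hk0 : (0 : ℝ) < k := by exact_mod_cast hk
  have hn0 : (0 : ℝ) < n := by exact_mod_cast (by omega : 0 < n)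
  set ρ : ℝ := ((s + 1 : ℕ) : ℝ) with hρ'
  have hρ0 : 0 < ρ := by positivity
  have hscale : (n : ℝ) ^ 2 / k / (73728 * ρ ^ 2) ≤ k * M ^ 2 / 512 := by
    have h : (n : ℝ) ≤ 12 * ρ * k * M := by rw [hρ']; exact_mod_cast hnle
    have h2 : (n : ℝ) ^ 2 ≤ (12 * ρ * k * M) ^ 2 := by gcongr
    rw [div_div, div_le_div_iff₀ (by positivity) (by norm_num)]
    nlinarith
  refine ⟨P ^ (s + 1), (hP.pow (s + 1)).mono_degree (by rw [← mul_assoc]; linarith), ?_, ?_, ?_⟩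
  · rw [eval_pow]; positivity
  · rw [pow_succ' P s]
    refine le_trans ?_ (hP.iterate_derivative_mul_eval_le (hP.pow s) (by omega) (by norm_num))
    rw [eval_mul, ← mul_assoc]
    have : 0 ≤ (P ^ s).eval 1 := by rw [eval_pow]; positivity
    gcongr
    refine le_trans ?_ hPm
    gcongr
  · have habs : ∀ x : ℝ, |(P ^ (s + 1)).eval x| ^ p = |P.eval x| ^ (ρ * p) := fun x => by
      rw [eval_pow, abs_pow, ← Real.rpow_natCast, ← Real.rpow_mul (abs_nonneg _)]
    have h1 : ∫ x in (-1 : ℝ)..1, |P.eval x| ^ (1 : ℝ) = ∫ x in (-1 : ℝ)..1, P.eval x := by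
      refine intervalIntegral.integral_congr fun x hx => ?_
      rw [Set.uIcc_of_le (by norm_num)] at hx
      simp only [Real.rpow_one]
      exact abs_of_nonneg (hP.nonneg hx)
    have h2 := hP.integral_rpow_le hk one_pos hρp
    rw [h1] at h2
    simp only [habs]
    have h3 : (P ^ (s + 1)).eval 1 ^ p = P.eval 1 ^ (ρ * p - 1) * P.eval 1 := by
      rw [eval_pow, ← Real.rpow_natCast, ← Real.rpow_mul hP1.le, Real.rpow_sub_one hP1.ne',
        div_mul_cancel₀ _ hP1.ne']
    have h4 : 512 / ((k : ℝ) * M ^ 2) ≤ 73728 * ρ ^ 2 / ((n : ℝ) ^ 2 / k) := by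
      have := one_div_le_one_div_of_le (by positivity) hscale
      rwa [one_div_div, one_div_div] at this
    calc ∫ x in (-1 : ℝ)..1, |P.eval x| ^ (ρ * p)
        ≤ P.eval 1 ^ (ρ * p - 1) * ∫ x in (-1 : ℝ)..1, P.eval x := h2
      _ ≤ P.eval 1 ^ (ρ * p - 1) * (73728 * ρ ^ 2 / ((n : ℝ) ^ 2 / k) * P.eval 1) := by
          gcongr
          exact hPint.trans (by gcongr)
      _ = 73728 * ρ ^ 2 / ((n : ℝ) ^ 2 / k) * (P ^ (s + 1)).eval 1 ^ p := by rw [h3]; ring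

theorem exists_extremal_of_degree_small {p : ℝ} (hp : 0 < p) {ρ : ℕ}
    {n k m : ℕ} (hk : 1 ≤ k) (hkn : k ≤ n) (hm : 2 * m ≤ k) (hn : n < ρ * (2 * (k + 2))) :
    ∃ P : ℝ[X], AbsMono P n k ∧ 0 < P.eval 1 ∧
      ((n : ℝ) ^ 2 / k / (24 * ρ)) ^ m * P.eval 1 ≤ (derivative^[m] P).eval 1 ∧
      ∫ x in (-1 : ℝ)..1, |P.eval x| ^ p ≤
        12 * ρ / p / ((n : ℝ) ^ 2 / k) * P.eval 1 ^ p := by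
  have hk0 : (0 : ℝ) < k := by exact_mod_cast hk
  have hn0 : (0 : ℝ) < n := by exact_mod_cast (by omega : 0 < n)
  have hρ0 : (0 : ℝ) < ρ := by
    have : ρ ≠ 0 := by rintro rfl; omega
    positivity
  have hscale : (n : ℝ) ^ 2 / k ≤ 6 * ρ * n := by
    have h : n ≤ 6 * ρ * k := by
      calc n ≤ ρ * (2 * (k + 2)) := hn.le
        _ ≤ ρ * (2 * (3 * k)) := by gcongr; omega
        _ = 6 * ρ * k := by ring
    have h' : (n : ℝ) ≤ 6 * ρ * k := by exact_mod_cast h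
    rw [div_le_iff₀ hk0]
    nlinarith
  have heval : ((X + C 1 : ℝ[X]) ^ n).eval 1 = 2 ^ n := by norm_num
  refine ⟨(X + C 1) ^ n, by simpa using (AbsMono.X_add_one k).pow n, ?_, ?_, ?_⟩
  · rw [heval]; positivity
  · rw [heval, iterate_derivative_X_add_pow]
    have h1 : ((n : ℝ) / 2) ^ m ≤ n.descFactorial m := by
      have h2 : (n : ℝ) / 2 ≤ ((n + 1 - m : ℕ) : ℝ) := by
        have : (n : ℝ) ≤ 2 * ((n + 1 - m : ℕ) : ℝ) := by
          exact_mod_cast (by omega : n ≤ 2 * (n + 1 - m))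
        linarith
      calc ((n : ℝ) / 2) ^ m ≤ ((n + 1 - m : ℕ) : ℝ) ^ m := by gcongr
        _ ≤ n.descFactorial m := by exact_mod_cast Nat.pow_sub_le_descFactorial n m
    have h3 : (2 : ℝ) ^ n = 2 ^ (n - m) * 2 ^ m := by rw [← pow_add]; congr 1; omega
    calc ((n : ℝ) ^ 2 / k / (24 * ρ)) ^ m * 2 ^ n ≤ (6 * ρ * n / (24 * ρ)) ^ m * 2 ^ n := by
          gcongr
      _ = ((n : ℝ) / 2) ^ m * 2 ^ (n - m) := by
          rw [h3, show 6 * (ρ : ℝ) * n / (24 * ρ) = n / 2 / 2 by field_simp; norm_num,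
            div_pow ((n : ℝ) / 2) 2 m]
          field_simp
      _ ≤ n.descFactorial m * 2 ^ (n - m) := by gcongr
      _ = _ := by norm_num
  · have hint : ∫ x in (-1 : ℝ)..1, |((X + C 1 : ℝ[X]) ^ n).eval x| ^ p =
        2 ^ (n * p + 1) / (n * p + 1) := by
      have hnp : 0 < (n : ℝ) * p := by positivity
      calc ∫ x in (-1 : ℝ)..1, |((X + C 1 : ℝ[X]) ^ n).eval x| ^ p
          = ∫ x in (-1 : ℝ)..1, (x + 1) ^ (n * p) := by
            refine intervalIntegral.integral_congr fun x hx => ?_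
            rw [Set.uIcc_of_le (by norm_num)] at hx
            have hx0 : 0 ≤ x + 1 := by linarith [hx.1]
            simp only [eval_pow, eval_add, eval_X, eval_C]
            rw [abs_of_nonneg (by positivity), ← Real.rpow_natCast, ← Real.rpow_mul hx0]
        _ = ∫ x in (0 : ℝ)..2, x ^ (n * p) := by
            rw [intervalIntegral.integral_comp_add_right (fun x : ℝ => x ^ (n * p)) 1]
            norm_num
        _ = 2 ^ (n * p + 1) / (n * p + 1) := by
            rw [integral_rpow (Or.inl (by linarith)), Real.zero_rpow (by positivity), sub_zero]
    rw [hint, heval, ← Real.rpow_natCast 2 n, ← Real.rpow_mul two_pos.le,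
      Real.rpow_add_one two_ne_zero]
    have h5 : 2 / ((n : ℝ) * p) ≤ 12 * ρ / p / ((n : ℝ) ^ 2 / k) := by
      rw [div_div, div_le_div_iff₀ (by positivity) (by positivity)]
      nlinarith
    calc (2 : ℝ) ^ (n * p) * 2 / (n * p + 1) ≤ 2 ^ (n * p) * 2 / (n * p) := by
          gcongr
          linarith
      _ = 2 / (n * p) * 2 ^ (n * p) := by ring
      _ ≤ _ := by gcongr

/-- Absolutely monotone polynomials showing the sharpness of the Markov–Nikolskii bounds. -/
theorem exists_extremal {p : ℝ} (hp : 0 < p) (m : ℕ) :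
    ∃ c C : ℝ, 0 < c ∧ 0 < C ∧ ∀ n k : ℕ, 1 ≤ k → k ≤ n → 2 * m ≤ k →
      ∃ P : ℝ[X], AbsMono P n k ∧ 0 < P.eval 1 ∧
        c * ((n : ℝ) ^ 2 / k) ^ m * P.eval 1 ≤ (derivative^[m] P).eval 1 ∧
        ∫ x in (-1 : ℝ)..1, |P.eval x| ^ p ≤ C / ((n : ℝ) ^ 2 / k) * P.eval 1 ^ p := by
  obtain ⟨ρ, hρdef⟩ : ∃ ρ, ρ = ⌈1 / p⌉₊ := ⟨_, rfl⟩
  have hρ : 1 ≤ ρ := hρdef ▸ Nat.ceil_pos.2 (by positivity)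
  have hρp : 1 ≤ ρ * p := by
    have := Nat.le_ceil (1 / p)
    rw [← hρdef, div_le_iff₀ hp] at this
    exact this
  have hρ1 : (1 : ℝ) ≤ ρ := by exact_mod_cast hρ
  refine ⟨(1 / (73728 * ρ ^ 2)) ^ m, 73728 * ρ ^ 2 + 12 * ρ / p, by positivity, by positivity,
    fun n k hk hkn hm => ?_⟩
  have hk0 : (0 : ℝ) < k := by exact_mod_cast hk
  have hn0 : (0 : ℝ) < n := by exact_mod_cast (by omega : 0 < n)
  have hc : ∀ {B : ℝ}, 0 < B → B ≤ 73728 * (ρ : ℝ) ^ 2 →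
      (1 / (73728 * (ρ : ℝ) ^ 2)) ^ m * ((n : ℝ) ^ 2 / k) ^ m ≤ ((n : ℝ) ^ 2 / k / B) ^ m := by
    intro B hB hB'
    rw [← mul_pow, one_div_mul_eq_div]
    gcongr
  rcases le_or_gt (ρ * (2 * (k + 2))) n with h | h
  · obtain ⟨P, hP, hP1, hPm, hPint⟩ := exists_extremal_of_degree_large hρ hρp hk hm h
    refine ⟨P, hP, hP1, le_trans ?_ hPm, hPint.trans ?_⟩
    · gcongr
      exact hc (by positivity) le_rfl
    · gcongr
      exact le_add_of_nonneg_right (by positivity)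
  · obtain ⟨P, hP, hP1, hPm, hPint⟩ := exists_extremal_of_degree_small hp hk hkn hm h
    refine ⟨P, hP, hP1, le_trans ?_ hPm, hPint.trans ?_⟩
    · gcongr
      exact hc (by positivity) (by nlinarith)
    · gcongr
      exact le_add_of_nonneg_left (by positivity)

theorem exists_extremal_Lnorm {p : ENNReal} (hp : 0 < p) (m : ℕ) :
    ∃ c K : ℝ, 0 < c ∧ 0 < K ∧ ∀ n k : ℕ, 1 ≤ k → k ≤ n → 2 * m ≤ k →
      ∃ P : ℝ[X], AbsMono P n k ∧ 0 < P.eval 1 ∧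
        c * ((n : ℝ) ^ 2 / k) ^ m * P.eval 1 ≤ (derivative^[m] P).eval 1 ∧
        ((n : ℝ) ^ 2 / k) ^ (1 / p.toReal) * Lnorm (fun x => P.eval x) p (-1) 1 ≤
          K * P.eval 1 := by
  by_cases hpt : p = ⊤
  · obtain ⟨c, C, hc, hC, h⟩ := exists_extremal one_pos m
    refine ⟨c, 1, hc, one_pos, fun n k hk hkn hm => ?_⟩
    obtain ⟨P, hP, hP1, hPm, -⟩ := h n k hk hkn hm
    refine ⟨P, hP, hP1, hPm, ?_⟩
    rw [hpt, hP.Lnorm_top hk]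
    simp
  · have hp0 : 0 < p.toReal := ENNReal.toReal_pos hp.ne' hpt
    obtain ⟨c, C, hc, hC, h⟩ := exists_extremal hp0 m
    refine ⟨c, C ^ (1 / p.toReal), hc, by positivity, fun n k hk hkn hm => ?_⟩
    obtain ⟨P, hP, hP1, hPm, hPint⟩ := h n k hk hkn hm
    refine ⟨P, hP, hP1, hPm, ?_⟩
    have hk0 : (0 : ℝ) < k := by exact_mod_cast hk
    have hn0 : (0 : ℝ) < n := by exact_mod_cast (by omega : 0 < n)
    have hν : 0 < (n : ℝ) ^ 2 / k := by positivity
    have hI := integral_abs_eval_rpow_nonneg P p.toReal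
    rw [Lnorm_of_ne_top _ hpt, ← Real.mul_rpow hν.le hI]
    calc ((n : ℝ) ^ 2 / k * ∫ x in (-1 : ℝ)..1, |P.eval x| ^ p.toReal) ^ (1 / p.toReal)
        ≤ (C * P.eval 1 ^ p.toReal) ^ (1 / p.toReal) := by
          refine Real.rpow_le_rpow (by positivity) ?_ (by positivity)
          calc (n : ℝ) ^ 2 / k * ∫ x in (-1 : ℝ)..1, |P.eval x| ^ p.toReal
              ≤ (n : ℝ) ^ 2 / k * (C / ((n : ℝ) ^ 2 / k) * P.eval 1 ^ p.toReal) := by gcongr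
            _ = C * P.eval 1 ^ p.toReal := by field_simp
      _ = C ^ (1 / p.toReal) * P.eval 1 := by
          rw [Real.mul_rpow hC.le (by positivity), ← Real.rpow_mul hP1.le,
            mul_one_div_cancel hp0.ne', Real.rpow_one]

/-- The lower Markov–Nikolskii bound is attained, up to constants. -/
theorem exists_le_Lnorm_iterate_derivative {p q : ENNReal} (hp : 0 < p) (hpq : p ≤ q) (m : ℕ) :
    ∃ c : ℝ, 0 < c ∧ ∀ n k : ℕ, 1 ≤ k → k ≤ n → 2 * m ≤ k →
      ∃ P : ℝ[X], AbsMono P n k ∧ 0 < Lnorm (fun x => P.eval x) p (-1) 1 ∧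
        c * ((n : ℝ) ^ 2 / k) ^ ((m : ℝ) + 1 / p.toReal - 1 / q.toReal) *
            Lnorm (fun x => P.eval x) p (-1) 1 ≤
          Lnorm (fun x => (derivative^[m] P).eval x) q (-1) 1 := by
  obtain ⟨c, K, hc, hK, h⟩ := exists_extremal_Lnorm hp m
  obtain ⟨A, hA, hAP⟩ := exists_eval_one_le_Lnorm hp
  obtain ⟨B, hB, hBP⟩ := exists_eval_one_le_Lnorm (hp.trans_le hpq)
  refine ⟨c / (K * (B * 2 ^ (1 / q.toReal))), by positivity, fun n k hk hkn hm => ?_⟩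
  obtain ⟨P, hP, hP1, hPm, hPle⟩ := h n k hk hkn hm
  have hk0 : (0 : ℝ) < k := by exact_mod_cast hk
  have hn0 : (0 : ℝ) < n := by exact_mod_cast (by omega : 0 < n)
  have hν : 0 < (n : ℝ) ^ 2 / k := by positivity
  have hD := hP.iterate_derivative m (by omega)
  have hDnn := hD.Lnorm_nonneg (by omega) q
  refine ⟨P, hP, ?_, ?_⟩
  · exact pos_of_mul_pos_right (hP1.trans_le (hAP n k P hk hkn hP)) (by positivity)
  have hDone := hBP n (k - m) _ (by omega) (by omega) hD
  set N := Lnorm (fun x => P.eval x) p (-1) 1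
  set E := Lnorm (fun x => (derivative^[m] P).eval x) q (-1) 1
  have hshift : (n : ℝ) ^ 2 / ((k - m : ℕ) : ℝ) ≤ 2 * ((n : ℝ) ^ 2 / k) := by
    have h2 : (k : ℝ) / 2 ≤ ((k - m : ℕ) : ℝ) := by
      have : (k : ℝ) ≤ 2 * ((k - m : ℕ) : ℝ) := by exact_mod_cast (by omega : k ≤ 2 * (k - m))
      linarith
    calc (n : ℝ) ^ 2 / ((k - m : ℕ) : ℝ) ≤ (n : ℝ) ^ 2 / (k / 2) := by gcongr
      _ = 2 * ((n : ℝ) ^ 2 / k) := by field_simp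
  set ν := (n : ℝ) ^ 2 / k
  have hDone' : (derivative^[m] P).eval 1 ≤ B * 2 ^ (1 / q.toReal) * ν ^ (1 / q.toReal) * E := by
    refine hDone.trans ?_
    rw [mul_assoc B (2 ^ _), ← Real.mul_rpow two_pos.le hν.le]
    gcongr
  have hchain : c * ν ^ m * (ν ^ (1 / p.toReal) * N) ≤
      K * (B * 2 ^ (1 / q.toReal)) * ν ^ (1 / q.toReal) * E := by
    calc c * ν ^ m * (ν ^ (1 / p.toReal) * N) ≤ c * ν ^ m * (K * P.eval 1) := by gcongr
      _ = K * (c * ν ^ m * P.eval 1) := by ring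
      _ ≤ K * (B * 2 ^ (1 / q.toReal) * ν ^ (1 / q.toReal) * E) := by
          exact mul_le_mul_of_nonneg_left (hPm.trans hDone') hK.le
      _ = _ := by ring
  rw [Real.rpow_sub hν, Real.rpow_add hν, Real.rpow_natCast]
  calc c / (K * (B * 2 ^ (1 / q.toReal))) * (ν ^ m * ν ^ (1 / p.toReal) / ν ^ (1 / q.toReal)) * N
      = c * ν ^ m * (ν ^ (1 / p.toReal) * N) /
          (K * (B * 2 ^ (1 / q.toReal)) * ν ^ (1 / q.toReal)) := by field_simp
    _ ≤ E := by
        rw [div_le_iff₀ (by positivity)]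
        linarith

/-- Erdélyi's theorem: for `0 < p ≤ q ≤ ∞`, `0 ≤ m ≤ k/2`, `1 ≤ k ≤ n`,
`M_{q,p}^{(k)}(n,m) ≍ (n²/k)^(m + 1/p - 1/q)` (convention `1/∞ = 0`). -/
theorem stmt18 (p q : ENNReal) (hp : 0 < p) (hpq : p ≤ q) (m : ℕ) :
    ∃ c C : ℝ, 0 < c ∧ 0 < C ∧ ∀ n k : ℕ, 1 ≤ k → k ≤ n → 2 * m ≤ k →
      c * ((n : ℝ) ^ 2 / (k : ℝ)) ^ ((m : ℝ) + 1 / p.toReal - 1 / q.toReal) ≤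
          Mconstr q p n k m ∧
        Mconstr q p n k m ≤
          C * ((n : ℝ) ^ 2 / (k : ℝ)) ^ ((m : ℝ) + 1 / p.toReal - 1 / q.toReal) := by
  obtain ⟨c, hc, hlower⟩ := exists_le_Lnorm_iterate_derivative hp hpq m
  obtain ⟨A, hA, hAP⟩ := exists_Lnorm_iterate_derivative_le (hp.trans_le hpq) m
  obtain ⟨B, hB, hBP⟩ := exists_Lnorm_le_Lnorm hp hpq
  refine ⟨c, A * B, hc, by positivity, fun n k hk hkn hm => ?_⟩
  obtain ⟨P, hP, hPpos, hPle⟩ := hlower n k hk hkn hm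
  have hk0 : (0 : ℝ) < k := by exact_mod_cast hk
  have hn0 : (0 : ℝ) < n := by exact_mod_cast (by omega : 0 < n)
  have hν : 0 < (n : ℝ) ^ 2 / k := by positivity
  have hupper : A * B * ((n : ℝ) ^ 2 / (k : ℝ)) ^ ((m : ℝ) + 1 / p.toReal - 1 / q.toReal) ∈
      upperBounds {r : ℝ | ∃ P : Polynomial ℝ, AbsMono P n k ∧
        0 < Lnorm (fun x => P.eval x) p (-1) 1 ∧
        r = Lnorm (fun x => (derivative^[m] P).eval x) q (-1) 1 /
              Lnorm (fun x => P.eval x) p (-1) 1} := by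
    rintro _ ⟨Q, hQ, hQpos, rfl⟩
    rw [div_le_iff₀ hQpos]
    calc _ ≤ A * ((n : ℝ) ^ 2 / k) ^ m * Lnorm (fun x => Q.eval x) q (-1) 1 :=
          hAP n k Q hk hkn hm hQ
      _ ≤ A * ((n : ℝ) ^ 2 / k) ^ m * (B * ((n : ℝ) ^ 2 / k) ^ (1 / p.toReal - 1 / q.toReal) *
            Lnorm (fun x => Q.eval x) p (-1) 1) := by
          gcongr
          exact hBP n k Q hk hkn hQ
      _ = _ := by
          rw [add_sub_assoc, Real.rpow_add hν, Real.rpow_natCast]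
          ring
  exact ⟨((le_div_iff₀ hPpos).2 hPle).trans (le_csSup ⟨_, hupper⟩ ⟨P, hP, hPpos, rfl⟩),
    csSup_le ⟨_, P, hP, hPpos, rfl⟩ hupper⟩
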